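/- Let k be an algebraically closed field of characteristic 0 and let F ∈ k[x_0,…,x_n] be an irreducible homogeneous polynomial of degree d ≥ 2 defining the integral non-linear hypersurface X = {F = 0} ⊂ P^n. Suppose that either n ≥ 5, or n = 4 and d ≥ 3. Suppose moreover that every hyperplane section of X is covered by its linear divisors: for every nonzero linear form ℓ on k^{n+1} and every nonzero x ∈ k^{n+1} with F(x) = 0 and ℓ(x) = 0, there exists an (n−2)-dimensional k-linear subspace W of k^{n+1} with x ∈ W such that both ℓ and F vanish identically on W. Then X is covered by its linear divisors: for every nonzero x ∈ k^{n+1} with F(x) = 0 there exists an (n−1)-dimensional k-linear subspace W of k^{n+1} with x ∈ W on which F vanishes identically. -/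

import Mathlib

open MvPolynomial

universe u


/-- A plain copy of the dual numbers, carrying only its ring structure. -/
def HDN (K : Type*) := TrivSqZeroExt K K

noncomputable instance HDN.inst (K : Type*) [Field K] : CommRing (HDN K) :=
  inferInstanceAs (CommRing (TrivSqZeroExt K K))

lemma HDN.der_of_hom {k K : Type*} [Field k] [Field K] [Algebra k K]
    (φ : K →+* TrivSqZeroExt K K) (h1 : ∀ x, (φ x).fst = x)
    (h2 : ∀ c : k, (φ (algebraMap k K c)).snd = 0) :
    ∃ D : Derivation k K K, ∀ x, D x = (φ x).snd := by
  refine ⟨Derivation.mk' ⟨⟨fun x => (φ x).snd, fun x y => by simp⟩, fun c x => ?_⟩ ?_, fun x => rfl⟩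
  · simp [Algebra.smul_def, TrivSqZeroExt.snd_mul, h1, h2]
  · intro a b
    simp [TrivSqZeroExt.snd_mul, h1, mul_comm]

lemma HDN.mul_zero' {K : Type*} [Field K] (x y : TrivSqZeroExt K K) (hx : x.fst = 0)
    (hy : y.fst = 0) : x * y = 0 := by
  apply TrivSqZeroExt.ext
  · rw [TrivSqZeroExt.fst_mul, hx]; simp
  · rw [TrivSqZeroExt.snd_mul, hx, hy]; simp

lemma const_of_der {k K : Type*} [Field k] [IsAlgClosed k] [CharZero k] [Field K] [Algebra k K]
    [Algebra.EssFiniteType k K] (r : K) (h : ∀ D : Derivation k K K, D r = 0) :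
    ∃ c, algebraMap k K c = r := by
  by_cases hr : IsAlgebraic k r
  · have hi := hr.isIntegral
    have hirr := minpoly.irreducible hi
    have hdeg := IsAlgClosed.degree_eq_one_of_irreducible k hirr
    exact minpoly.mem_range_of_degree_eq_one k r hdeg
  · exfalso
    have hinj : Function.Injective (Polynomial.aeval (R := k) r) := transcendental_iff_injective.1 hr
    let L := FractionRing (Polynomial k)
    let f1 : L →+* K := IsFractionRing.lift (g := (Polynomial.aeval (R := k) r).toRingHom) hinj
    let a2 : Polynomial k →ₐ[k] TrivSqZeroExt K K :=
      Polynomial.aeval (TrivSqZeroExt.inl r + TrivSqZeroExt.inr 1)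
    have ha2 : ∀ p, (a2 p).fst = Polynomial.aeval r p := by
      intro p
      have : (TrivSqZeroExt.fstHom k K K).comp a2 = Polynomial.aeval (R := k) r := by
        ext; simp [a2]
      exact congrArg (fun f => f p) this
    have hu : ∀ y : nonZeroDivisors (Polynomial k), IsUnit (a2.toRingHom y) := by
      intro y
      refine TrivSqZeroExt.isUnit_iff_isUnit_fst.2 ?_
      have := ha2 y
      change IsUnit (a2 (y : Polynomial k)).fst
      rw [this, isUnit_iff_ne_zero, Ne, map_eq_zero_iff _ hinj]
      exact nonZeroDivisors.coe_ne_zero y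
    let f2 : L →+* HDN K := IsLocalization.lift (M := nonZeroDivisors (Polynomial k)) (P := TrivSqZeroExt K K) hu
    have hf1 : ∀ p, f1 (algebraMap (Polynomial k) L p) = Polynomial.aeval r p := fun p =>
      IsFractionRing.lift_algebraMap hinj p
    have hf2 : ∀ p, f2 (algebraMap (Polynomial k) L p) = a2 p := fun p =>
      IsLocalization.lift_eq hu p
    let : Algebra L K := f1.toAlgebra
    let : Algebra L (HDN K) := f2.toAlgebra
    let π0 : HDN K →+* K := (TrivSqZeroExt.fstHom k K K).toRingHom
    have hπ0 : ∀ x : L, π0 (f2 x) = f1 x := by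
      have : π0.comp f2 = f1 := by
        refine IsLocalization.ringHom_ext (nonZeroDivisors (Polynomial k)) ?_
        refine RingHom.ext fun p => ?_
        simp only [RingHom.comp_apply, hf1, hf2]
        exact ha2 _
      intro x; exact congrArg (fun f => f x) this
    let π : HDN K →ₐ[L] K := { π0 with commutes' := hπ0 }
    have hsurj : Function.Surjective π := fun x => ⟨(TrivSqZeroExt.inl x : TrivSqZeroExt K K), rfl⟩
    have hnil : IsNilpotent (RingHom.ker (π : HDN K →+* K)) := by
      refine ⟨2, ?_⟩
      rw [pow_two, Ideal.zero_eq_bot, eq_bot_iff, Ideal.mul_le]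
      intro x hx y hy
      exact HDN.mul_zero' x y hx hy
    have : IsScalarTower k L K := IsScalarTower.of_algebraMap_eq fun c => by
      change _ = f1 _
      rw [IsScalarTower.algebraMap_apply k (Polynomial k) L, hf1]; simp
    have : Algebra.EssFiniteType L K := Algebra.EssFiniteType.of_comp k L K
    have : CharZero L := charZero_of_injective_algebraMap (algebraMap k L).injective
    let φ : K →ₐ[L] HDN K := Algebra.FormallySmooth.liftOfSurjective (AlgHom.id L K) π hsurj hnil
    have hφ : ∀ x, π (φ x) = x := fun x =>
      Algebra.FormallySmooth.liftOfSurjective_apply (AlgHom.id L K) π hsurj hnil x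
    have hφL : ∀ x : L, φ (f1 x) = f2 x := fun x => φ.commutes x
    obtain ⟨D, hD⟩ := HDN.der_of_hom (k := k) (K := K) φ.toRingHom hφ (by
      intro c
      have := hφL (algebraMap (Polynomial k) L (Polynomial.C c))
      rw [hf1, hf2] at this
      simp only [Polynomial.aeval_C] at this
      change TrivSqZeroExt.snd (φ _ : TrivSqZeroExt K K) = 0
      rw [this]; simp [a2, TrivSqZeroExt.algebraMap_eq_inl'])
    have := h D
    rw [hD] at this
    have h3 := hφL (algebraMap (Polynomial k) L Polynomial.X)
    rw [hf1, hf2] at h3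
    simp only [Polynomial.aeval_X] at h3
    change TrivSqZeroExt.snd (φ _ : TrivSqZeroExt K K) = 0 at this
    rw [h3] at this
    simp [a2] at this

/-- Derivations extend from a domain to its fraction field. -/
lemma exists_der {k K A σ : Type*} [Field k] [Field K] [CommRing A] [IsDomain A] [Algebra k A]
    [Algebra A K] [Algebra k K] [IsScalarTower k A K] [IsFractionRing A K]
    (F : MvPolynomial σ k) (pr : MvPolynomial σ k →ₐ[k] A) (hpr : Function.Surjective pr)
    (hker : ∀ p, pr p = 0 ↔ F ∣ p) [Fintype σ]
    (ξ : σ → K) (hξ : ∑ i, algebraMap A K (pr (pderiv i F)) * ξ i = 0) :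
    ∃ D : Derivation k K K, ∀ i, D (algebraMap A K (pr (X i))) = ξ i := by
  classical
  let ι : MvPolynomial σ k →ₐ[k] K := (IsScalarTower.toAlgHom k A K).comp pr
  let a : MvPolynomial σ k →ₐ[k] TrivSqZeroExt K K :=
    aeval (fun i => TrivSqZeroExt.inl (ι (X i)) + TrivSqZeroExt.inr (ξ i))
  have ha1 : ∀ p, (a p).fst = ι p := by
    intro p
    have : (TrivSqZeroExt.fstHom k K K).comp a = ι := by
      ext i; simp [a]
    exact congrArg (fun f => f p) this
  have ha2 : ∀ p, (a p).snd = ∑ i, ι (pderiv i p) * ξ i := by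
    intro p
    induction p using MvPolynomial.induction_on with
    | C c => simp [a, TrivSqZeroExt.algebraMap_eq_inl']
    | add p q hp hq => simp [hp, hq, add_mul, Finset.sum_add_distrib]
    | mul_X p j hp =>
      rw [map_mul, TrivSqZeroExt.snd_mul, hp, ha1, ha1]
      simp [a, pderiv_X, Pi.single_apply, add_mul, Finset.sum_add_distrib, 
        apply_ite ι]
      rw [Finset.sum_mul]
      refine Finset.sum_congr rfl fun i _ => by ring
  have haF : a F = 0 := by
    apply TrivSqZeroExt.ext
    · rw [ha1]; simp [ι, (hker F).2 dvd_rfl]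
    · rw [ha2]; exact hξ
  have hak : ∀ p, pr p = 0 → a p = 0 := by
    intro p hp
    obtain ⟨q, rfl⟩ := (hker p).1 hp
    rw [map_mul, haF, zero_mul]
  let b : A →ₐ[k] TrivSqZeroExt K K := AlgHom.liftOfSurjective pr hpr a hak
  have hb : ∀ p, b (pr p) = a p := fun p => AlgHom.liftOfSurjective_apply ..
  have hu : ∀ y : nonZeroDivisors A, IsUnit (b.toRingHom y) := by
    intro y
    obtain ⟨p, hp⟩ := hpr y
    refine TrivSqZeroExt.isUnit_iff_isUnit_fst.2 ?_
    change IsUnit (b (y : A)).fst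
    rw [← hp, hb, ha1, isUnit_iff_ne_zero]
    change algebraMap A K (pr p) ≠ 0
    rw [hp]
    exact IsFractionRing.to_map_ne_zero_of_mem_nonZeroDivisors y.2
  let φ : K →+* TrivSqZeroExt K K := IsLocalization.lift hu
  have hφ : ∀ p, φ (algebraMap A K (pr p)) = a p := fun p => by
    rw [← hb]; exact IsLocalization.lift_eq hu _
  obtain ⟨D, hD⟩ := HDN.der_of_hom (k := k) (K := K) φ (by
    have : (TrivSqZeroExt.fstHom k K K).toRingHom.comp φ = RingHom.id K := by
      refine IsLocalization.ringHom_ext (nonZeroDivisors A) ?_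
      ext y
      obtain ⟨p, rfl⟩ := hpr y
      simp only [RingHom.comp_apply, hφ]
      exact ha1 p
    intro x; exact congrArg (fun f => f x) this) (by
    intro c
    have := hφ (C c)
    rw [show (C c : MvPolynomial σ k) = algebraMap k _ c from rfl, pr.commutes,
      ← IsScalarTower.algebraMap_apply] at this
    rw [this]; simp [TrivSqZeroExt.algebraMap_eq_inl'])
  refine ⟨D, fun i => ?_⟩
  rw [hD, hφ, ha2]
  simp [pderiv_X, Pi.single_apply, apply_ite ι]


lemma der_aeval {k A σ : Type*} [Field k] [CommRing A] [Algebra k A] [Fintype σ]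
    (D : Derivation k A A) (g : σ → A) (p : MvPolynomial σ k) :
    D (aeval g p) = ∑ i, aeval g (pderiv i p) * D (g i) := by
  classical
  induction p using MvPolynomial.induction_on with
  | C c => simp
  | add p q hp hq => simp [hp, hq, add_mul, Finset.sum_add_distrib]
  | mul_X p j hp =>
    rw [map_mul, Derivation.leibniz, hp]
    simp [pderiv_X, Pi.single_apply, add_mul, Finset.sum_add_distrib, apply_ite (aeval g),
      Finset.mul_sum]
    refine Finset.sum_congr rfl fun i _ => by ring

/-- gradient -/
noncomputable def gr {k σ : Type*} [Field k] [Fintype σ] (F : MvPolynomial σ k) (x : σ → k) :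
    (σ → k) →ₗ[k] k :=
  ∑ i, eval x (pderiv i F) • LinearMap.proj i

/-- Hessian form -/
noncomputable def bl {k σ : Type*} [Field k] [Fintype σ] (F : MvPolynomial σ k) (x : σ → k)
    (y : σ → k) : (σ → k) →ₗ[k] k :=
  ∑ j, (∑ i, eval x (pderiv i (pderiv j F)) * y i) • LinearMap.proj j

/-- third derivative -/
noncomputable def tl {k σ : Type*} [Field k] [Fintype σ] (F : MvPolynomial σ k) (x : σ → k)
    (y z w : σ → k) : k :=
  ∑ l, ∑ j, ∑ i, eval x (pderiv i (pderiv j (pderiv l F))) * y i * z j * w l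

section
variable {k σ : Type*} [Field k] [Fintype σ] (F : MvPolynomial σ k)

lemma gr_apply (x y : σ → k) : gr F x y = ∑ i, eval x (pderiv i F) * y i := by
  simp [gr]

lemma bl_apply (x y z : σ → k) :
    bl F x y z = ∑ j, ∑ i, eval x (pderiv i (pderiv j F)) * y i * z j := by
  simp [bl, Finset.sum_mul]

lemma pderiv_comm' (i j : σ) (p : MvPolynomial σ k) :
    pderiv i (pderiv j p) = pderiv j (pderiv i p) := by
  classical
  induction p using MvPolynomial.induction_on with
  | C c => simp
  | add p q hp hq => simp [hp, hq]
  | mul_X p l hp =>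
    simp only [Derivation.leibniz, map_add, smul_eq_mul, pderiv_X, hp, Pi.single_apply]
    split_ifs <;> simp <;> ring

lemma bl_symm (x y z : σ → k) : bl F x y z = bl F x z y := by
  rw [bl_apply, bl_apply, Finset.sum_comm]
  refine Finset.sum_congr rfl fun i _ => Finset.sum_congr rfl fun j _ => ?_
  rw [pderiv_comm']; ring

lemma bl_add (x y y' z : σ → k) : bl F x (y + y') z = bl F x y z + bl F x y' z := by
  rw [bl_symm, map_add, bl_symm, bl_symm F x z y']

lemma bl_smul (x y z : σ → k) (c : k) : bl F x (c • y) z = c * bl F x y z := by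
  rw [bl_symm, map_smul, bl_symm, smul_eq_mul]

lemma bl_sub (x y y' z : σ → k) : bl F x (y - y') z = bl F x y z - bl F x y' z := by
  rw [bl_symm, map_sub, bl_symm, bl_symm F x z y']

/-- line polynomial -/
noncomputable def lnp (p : MvPolynomial σ k) (x y : σ → k) : Polynomial k :=
  aeval (fun i => Polynomial.C (x i) + Polynomial.C (y i) * Polynomial.X) p

lemma lnp_eval (p : MvPolynomial σ k) (x y : σ → k) (t : k) :
    (lnp p x y).eval t = eval (x + t • y) p := by
  have : ((Polynomial.aeval t : Polynomial k →ₐ[k] k).comp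
    (aeval (fun i => Polynomial.C (x i) + Polynomial.C (y i) * Polynomial.X) :
      MvPolynomial σ k →ₐ[k] Polynomial k)) = aeval (x + t • y) := by
    ext i; simp; ring
  have h2 := congrArg (fun f => f p) this
  simpa [lnp, Polynomial.aeval_def, Polynomial.eval₂_eq_eval_map, aeval_eq_eval] using h2

lemma lnp_der (p : MvPolynomial σ k) (x y : σ → k) :
    Polynomial.derivative (lnp p x y) = ∑ i, lnp (pderiv i p) x y * Polynomial.C (y i) := by
  have := der_aeval (Polynomial.derivative' (R := k))
    (fun i => Polynomial.C (x i) + Polynomial.C (y i) * Polynomial.X) p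
  simpa [lnp, Polynomial.derivative'] using this

lemma line_calc [Infinite k] {x y : σ → k} (h : ∀ t : k, eval (x + t • y) F = 0) :
    gr F x y = 0 ∧ bl F x y y = 0 ∧ tl F x y y y = 0 := by
  have h0 : lnp F x y = 0 := Polynomial.funext fun t => by rw [lnp_eval, h]; simp
  have h1 : Polynomial.derivative (lnp F x y) = 0 := by rw [h0]; simp
  have h2 : Polynomial.derivative (Polynomial.derivative (lnp F x y)) = 0 := by rw [h1]; simp
  have h3 : Polynomial.derivative (Polynomial.derivative (Polynomial.derivative (lnp F x y))) = 0 := by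
    rw [h2]; simp
  have e1 := congrArg (Polynomial.eval 0) h1
  have e2 := congrArg (Polynomial.eval 0) h2
  have e3 := congrArg (Polynomial.eval 0) h3
  simp only [lnp_der, map_sum, Polynomial.derivative_mul, Polynomial.derivative_C, mul_zero,
    add_zero, Polynomial.eval_finsetSum, Polynomial.eval_mul, lnp_eval, Polynomial.eval_C,
    zero_smul, Polynomial.eval_zero, Finset.sum_mul] at e1 e2 e3
  refine ⟨by rw [gr_apply]; exact e1, by rw [bl_apply]; exact e2, ?_⟩
  rw [tl]; exact e3

lemma euler_gr {d : ℕ} (hF : F.IsHomogeneous d) (x : σ → k) : gr F x x = d * eval x F := by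
  have := congrArg (eval x) hF.sum_X_mul_pderiv
  rw [gr_apply]
  simpa [mul_comm] using this

lemma euler_bl {d : ℕ} (hF : F.IsHomogeneous d) (x y : σ → k) :
    bl F x x y = ((d - 1 : ℕ) : k) * gr F x y := by
  rw [bl_apply, gr_apply, Finset.mul_sum]
  refine Finset.sum_congr rfl fun j _ => ?_
  have := congrArg (eval x) (hF.pderiv (i := j)).sum_X_mul_pderiv
  simp only [map_sum, map_mul, eval_X, map_nsmul, nsmul_eq_mul, map_natCast] at this
  rw [← mul_assoc, ← this, Finset.sum_mul]
  refine Finset.sum_congr rfl fun i _ => by ring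
end

lemma finrank_inf_ker {k V : Type*} [Field k] [AddCommGroup V] [Module k V] [FiniteDimensional k V]
    (W : Submodule k V) (ℓ : V →ₗ[k] k) (h : ∃ w ∈ W, ℓ w ≠ 0) :
    Module.finrank k (W ⊓ LinearMap.ker ℓ : Submodule k V) + 1 = Module.finrank k W := by
  obtain ⟨w, hw, hℓ⟩ := h
  have h1 := LinearMap.finrank_range_add_finrank_ker (ℓ.domRestrict W)
  have h2 : LinearMap.range (ℓ.domRestrict W) = ⊤ := by
    rw [LinearMap.range_eq_top]
    intro c
    refine ⟨(c / ℓ w) • ⟨w, hw⟩, ?_⟩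
    simp [hℓ]
  have h3 : Module.finrank k (LinearMap.ker (ℓ.domRestrict W)) =
      Module.finrank k (W ⊓ LinearMap.ker ℓ : Submodule k V) := by
    have : (LinearMap.ker (ℓ.domRestrict W)).map W.subtype = W ⊓ LinearMap.ker ℓ := by
      ext v; simp [and_comm]
    rw [← this]
    exact (Submodule.finrank_map_subtype_eq W _).symm
  rw [h2, finrank_top, Module.finrank_self] at h1
  omega


lemma iso3 {k V : Type*} [Field k] [AddCommGroup V] [Module k V] [FiniteDimensional k V]
    (hV : Module.finrank k V = 3) (B : V → V →ₗ[k] k) 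
    (hlin : ∀ x c y, (∀ z, B x z = c * B y z) → x = c • y)
    (u v : V) (hv : v ≠ 0) (huu : B u u = 0) (huv : B u v = 0) (hvu : B v u = 0)
    (hvv : B v v = 0) : ∃ c : k, u = c • v := by
  have hBv : ∃ w, B v w ≠ 0 := by
    by_contra! h
    exact hv (by simpa using hlin v 0 v (fun z => by simp [h]))
  obtain ⟨w, hw⟩ := hBv
  have h1 := finrank_inf_ker ⊤ (B v) ⟨w, trivial, hw⟩
  rw [top_inf_eq, finrank_top, hV] at h1
  by_cases h : ∃ x ∈ LinearMap.ker (B v), B u x ≠ 0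
  · have h2 := finrank_inf_ker (LinearMap.ker (B v)) (B u) h
    have h3 : Module.finrank k (LinearMap.ker (B v) ⊓ LinearMap.ker (B u) : Submodule k V) = 1 := by
      omega
    have := (finrank_eq_one_iff_of_nonzero' (⟨v, by simp [hvv, huv]⟩ :
      (LinearMap.ker (B v) ⊓ LinearMap.ker (B u) : Submodule k V)) (by simpa using hv)).1 h3
        ⟨u, by simp [huu, hvu]⟩
    obtain ⟨c, hc⟩ := this
    exact ⟨c, by simpa using (congrArg Subtype.val hc).symm⟩
  · push Not at h
    refine ⟨B u w / B v w, hlin _ _ _ fun z => ?_⟩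
    have := h (z - (B v z / B v w) • w) (by simp [hw])
    simp [sub_eq_zero] at this
    rw [this]; field_simp

section
variable {k : Type*} [Field k] [IsAlgClosed k] [CharZero k] {n d : ℕ}
    {F : MvPolynomial (Fin (n + 1)) k}

lemma ptA1 (hhom : F.IsHomogeneous d) (a : Fin (n + 1) → k) 
    (hq : ∃ y, gr F a y = 0 ∧ bl F a y y ≠ 0)
    (h3 : ∀ e1 e2 e3, gr F a e1 = 0 → gr F a e2 = 0 → gr F a e3 = 0 → bl F a e1 e1 = 1 →
      bl F a e2 e2 = 1 → bl F a e3 e3 = 1 → bl F a e1 e2 = 0 → bl F a e1 e3 = 0 → bl F a e2 e3 = 0 →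
      False) :
    ∃ l1 l2 : (Fin (n + 1) → k) →ₗ[k] k, (∀ t, gr F a t = 0 → bl F a t t = l1 t * l2 t) ∧
      l1 a = 0 ∧ l2 a = 0 ∧ ∃ e, gr F a e = 0 ∧ l1 e = 1 ∧ l2 e = 1 := by
  have nrm : ∀ y, bl F a y y ≠ 0 → ∃ c : k, bl F a (c • y) (c • y) = 1 := by
    intro y hy
    obtain ⟨c, hc⟩ := IsAlgClosed.exists_pow_nat_eq (bl F a y y)⁻¹ (n := 2) (by norm_num)
    refine ⟨c, ?_⟩
    rw [bl_smul, map_smul, smul_eq_mul, ← mul_assoc, ← pow_two, hc, inv_mul_cancel₀ hy]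
  have hrad : ∀ y, gr F a y = 0 → bl F a y a = 0 := by
    intro y hy
    rw [bl_symm, euler_bl F hhom, hy, mul_zero]
  obtain ⟨y, hy, hyq⟩ := hq
  obtain ⟨c, hc⟩ := nrm y hyq
  obtain ⟨e1, he1, hq1⟩ : ∃ e1, gr F a e1 = 0 ∧ bl F a e1 e1 = 1 := ⟨c • y, by simp [hy], hc⟩
  by_cases h : ∃ z, gr F a z = 0 ∧ bl F a e1 z = 0 ∧ bl F a z z ≠ 0
  · obtain ⟨z, hz, hz1, hzq⟩ := h
    obtain ⟨c, hc⟩ := nrm z hzq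
    obtain ⟨e2, he2, h12, hq2⟩ : ∃ e2, gr F a e2 = 0 ∧ bl F a e1 e2 = 0 ∧ bl F a e2 e2 = 1 :=
      ⟨c • z, by simp [hz], by simp [hz1], hc⟩
    obtain ⟨i, hi⟩ := IsAlgClosed.exists_pow_nat_eq (-1 : k) (n := 2) (by norm_num)
    have h21 : bl F a e2 e1 = 0 := by rw [bl_symm, h12]
    refine ⟨bl F a e1 + i • bl F a e2, bl F a e1 - i • bl F a e2, ?_, ?_, ?_, e1, he1, ?_, ?_⟩
    · intro t ht
      set w := t - bl F a e1 t • e1 - bl F a e2 t • e2 with hw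
      have hwT : gr F a w = 0 := by simp [hw, ht, he1, he2]
      have hw1 : bl F a e1 w = 0 := by simp [hw, hq1, h12]
      have hw2 : bl F a e2 w = 0 := by simp [hw, hq2, h21]
      have hwq : bl F a w w = 0 := by
        by_contra hne
        obtain ⟨c, hc⟩ := nrm w hne
        exact h3 e1 e2 (c • w) he1 he2 (by simp [hwT]) hq1 hq2 hc h12 (by simp [hw1])
          (by simp [hw2])
      have h4 : bl F a w w = bl F a t t - bl F a e1 t ^ 2 - bl F a e2 t ^ 2 := by
        have : bl F a w w = bl F a t w - bl F a e1 t * bl F a e1 w - bl F a e2 t * bl F a e2 w := by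
          conv_lhs => rw [hw, bl_sub, bl_sub, bl_smul, bl_smul, ← hw]
        rw [this, hw1, hw2, hw]
        simp only [map_sub, map_smul, smul_eq_mul, bl_symm F a t e1, bl_symm F a t e2]
        ring
      simp only [LinearMap.add_apply, LinearMap.sub_apply, LinearMap.smul_apply, smul_eq_mul]
      rw [hwq] at h4
      linear_combination -h4 + hi * (bl F a e2 t) ^ 2
    · simp [hrad _ he1, hrad _ he2]
    · simp [hrad _ he1, hrad _ he2]
    · simp [hq1, h21]
    · simp [hq1, h21]
  · push Not at h
    refine ⟨bl F a e1, bl F a e1, ?_, hrad _ he1, hrad _ he1, e1, he1, hq1, hq1⟩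
    intro t ht
    set w := t - bl F a e1 t • e1 with hw
    have hwT : gr F a w = 0 := by simp [hw, ht, he1]
    have hw1 : bl F a e1 w = 0 := by simp [hw, hq1]
    have hwq := h w hwT hw1
    have h4 : bl F a w w = bl F a t t - bl F a e1 t ^ 2 := by
      have : bl F a w w = bl F a t w - bl F a e1 t * bl F a e1 w := by
        conv_lhs => rw [hw, bl_sub, bl_smul, ← hw]
      rw [this, hw1, hw]
      simp only [map_sub, map_smul, smul_eq_mul, bl_symm F a t e1]
      ring
    rw [hwq] at h4
    linear_combination -h4

lemma line_of_sub {W : Submodule k (Fin (n + 1) → k)} {a y : Fin (n + 1) → k} (ha : a ∈ W)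
    (hy : y ∈ W) (h : ∀ y ∈ W, eval y F = 0) :
    gr F a y = 0 ∧ bl F a y y = 0 ∧ tl F a y y y = 0 :=
  line_calc F fun t => h _ (W.add_mem ha (W.smul_mem t hy))

/-- choose a point of `W` outside `F = 0` and outside `l = 0`. -/
lemma avoid {W : Submodule k (Fin (n + 1) → k)} (l : (Fin (n + 1) → k) →ₗ[k] k)
    {p w : Fin (n + 1) → k} (hp : p ∈ W) (hFp : eval p F ≠ 0) (hw : w ∈ W) (hl : l w ≠ 0) :
    ∃ q ∈ W, eval q F ≠ 0 ∧ l q ≠ 0 := by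
  have h1 : lnp F p w ≠ 0 := by
    intro h
    apply hFp
    have := lnp_eval F p w 0
    rw [h] at this; simpa using this.symm
  have h2 : (Polynomial.C (l p) + Polynomial.C (l w) * Polynomial.X) ≠ 0 := by
    intro h
    have := congrArg (fun p => Polynomial.coeff p 1) h
    simp at this
    exact hl this
  obtain ⟨t, ht⟩ : ∃ t, Polynomial.eval t (lnp F p w *
      (Polynomial.C (l p) + Polynomial.C (l w) * Polynomial.X)) ≠ 0 := by
    by_contra! h
    exact mul_ne_zero h1 h2 (Polynomial.funext fun t => by rw [h t]; simp)
  rw [Polynomial.eval_mul, lnp_eval] at ht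
  refine ⟨p + t • w, W.add_mem hp (W.smul_mem t hw), left_ne_zero_of_mul ht, ?_⟩
  have := right_ne_zero_of_mul ht
  rw [map_add, map_smul, smul_eq_mul]
  simpa [mul_comm (l w)] using this

lemma ptA (hn : 4 ≤ n) (hhom : F.IsHomogeneous d) (a : Fin (n + 1) → k) (hFa : eval a F = 0)
    (hcov : ∀ ℓ : (Fin (n + 1) → k) →ₗ[k] k, ℓ ≠ 0 → ℓ a = 0 →
      ∃ W : Submodule k (Fin (n + 1) → k), Module.finrank k W = n - 2 ∧ a ∈ W ∧
        ∀ y ∈ W, ℓ y = 0 ∧ eval y F = 0)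
    (hg : gr F a ≠ 0)
    (hq : ∃ y, gr F a y = 0 ∧ bl F a y y ≠ 0)
    (h3 : ∀ e1 e2 e3, gr F a e1 = 0 → gr F a e2 = 0 → gr F a e3 = 0 → bl F a e1 e1 = 1 →
      bl F a e2 e2 = 1 → bl F a e3 e3 = 1 → bl F a e1 e2 = 0 → bl F a e1 e3 = 0 → bl F a e2 e3 = 0 →
      False) :
    ∃ W : Submodule k (Fin (n + 1) → k), Module.finrank k W = n - 1 ∧ a ∈ W ∧
        ∀ y ∈ W, eval y F = 0 := by
  classical
  obtain ⟨l1, l2, hl, hl1, hl2, e, he, he1, he2⟩ := ptA1 hhom a hq h3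
  set T := LinearMap.ker (gr F a) with hT
  have hTr : Module.finrank k T = n := by
    obtain ⟨v, hv⟩ : ∃ v, gr F a v ≠ 0 := by
      by_contra! h
      exact hg (LinearMap.ext h)
    have := finrank_inf_ker ⊤ (gr F a) ⟨v, trivial, hv⟩
    rw [top_inf_eq, finrank_top] at this
    simpa using this
  have hr1 := finrank_inf_ker T l1 ⟨e, he, by simp [he1]⟩
  have hr2 := finrank_inf_ker T l2 ⟨e, he, by simp [he2]⟩
  set W1 := T ⊓ LinearMap.ker l1 with hW1
  set W2 := T ⊓ LinearMap.ker l2 with hW2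
  have haT : a ∈ T := by simp [hT, euler_gr F hhom, hFa]
  by_contra hcon
  have hp1 : ∃ p ∈ W1, eval p F ≠ 0 := by
    by_contra! h
    exact hcon ⟨W1, by omega, ⟨haT, hl1⟩, h⟩
  have hp2 : ∃ p ∈ W2, eval p F ≠ 0 := by
    by_contra! h
    exact hcon ⟨W2, by omega, ⟨haT, hl2⟩, h⟩
  obtain ⟨p1, hp1, hF1⟩ := hp1
  -- good choice
  obtain ⟨p1, p2, hp1, hF1, hp2, hF2, w1, hw1, w2, hw2, hs1, hs2⟩ : ∃ p1 p2, p1 ∈ W1 ∧ eval p1 F ≠ 0 ∧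
      p2 ∈ W2 ∧ eval p2 F ≠ 0 ∧ ∃ w1 ∈ W1, ∃ w2 ∈ W2, w1 ∉ Submodule.span k {a, p1, p2} ∧
        w2 ∉ Submodule.span k {a, p1, p2} := by
    by_cases hEq : W1 = W2
    · have : ∃ w ∈ W1, w ∉ Submodule.span k {a, p1, p1} := by
        by_contra! h
        have h5 := Submodule.finrank_mono (show W1 ≤ _ from h)
        have h6 := finrank_span_le_card (R := k) ({a, p1, p1} : Set (Fin (n + 1) → k))
        have h7 : ({a, p1, p1} : Set (Fin (n + 1) → k)).toFinset.card ≤ 2 := by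
          simp only [Set.insert_eq_of_mem (Set.mem_singleton p1), Set.toFinset_insert, Set.toFinset_singleton]
          exact Finset.card_le_two
        omega
      obtain ⟨w, hw, hws⟩ := this
      exact ⟨p1, p1, hp1, hF1, hEq ▸ hp1, hF1, w, hw, w, hEq ▸ hw, hws, hws⟩
    · obtain ⟨p2, hp2, hF2⟩ := hp2
      have hrr : Module.finrank k W1 = Module.finrank k W2 := by omega
      have h12 : ∃ w ∈ W1, l2 w ≠ 0 := by
        by_contra! h
        exact hEq (Submodule.eq_of_le_of_finrank_eq (fun w hw => ⟨hw.1, h w hw⟩) hrr)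
      have h21 : ∃ w ∈ W2, l1 w ≠ 0 := by
        by_contra! h
        exact hEq (Submodule.eq_of_le_of_finrank_eq (S₁ := W2) (S₂ := W1) (fun w hw => ⟨hw.1, h w hw⟩) hrr.symm).symm
      obtain ⟨w1, hw1, hlw1⟩ := h12
      obtain ⟨w2, hw2, hlw2⟩ := h21
      obtain ⟨q1, hq1, hFq1, hlq1⟩ := avoid l2 hp1 hF1 hw1 hlw1
      obtain ⟨q2, hq2, hFq2, hlq2⟩ := avoid l1 hp2 hF2 hw2 hlw2
      have h6 : Module.finrank k (Submodule.span k {a, q1, q2}) ≤ 3 := by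
        refine (finrank_span_le_card (R := k) ({a, q1, q2} : Set (Fin (n + 1) → k))).trans ?_
        simp only [Set.toFinset_insert, Set.toFinset_singleton]
        exact Finset.card_le_three
      have key : ∀ W : Submodule k (Fin (n + 1) → k), Module.finrank k W + 1 = n →
          (∃ q ∈ Submodule.span k {a, q1, q2}, q ∉ W) → 
          ∃ w ∈ W, w ∉ Submodule.span k {a, q1, q2} := by
        intro W hW ⟨q, hq, hqW⟩
        by_contra! h
        have := Submodule.eq_of_le_of_finrank_le (show W ≤ _ from h) (by omega)
        exact hqW (this ▸ hq)
      obtain ⟨v1, hv1, hv1s⟩ := key W1 (by omega) ⟨q2, Submodule.subset_span (by simp), fun h => hlq2 h.2⟩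
      obtain ⟨v2, hv2, hv2s⟩ := key W2 (by omega) ⟨q1, Submodule.subset_span (by simp), fun h => hlq1 h.2⟩
      exact ⟨q1, q2, hq1, hFq1, hq2, hFq2, v1, hv1, v2, hv2, hv1s, hv2s⟩
  obtain ⟨ℓ, hℓS, hℓ1, hℓ2⟩ : ∃ ℓ : (Fin (n + 1) → k) →ₗ[k] k, 
      Submodule.span k {a, p1, p2} ≤ LinearMap.ker ℓ ∧ ℓ w1 ≠ 0 ∧ ℓ w2 ≠ 0 := by
    obtain ⟨f, hf1, hf⟩ := Submodule.exists_le_ker_of_notMem hs1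
    obtain ⟨g, hg1, hg⟩ := Submodule.exists_le_ker_of_notMem hs2
    by_cases c1 : f w2 = 0
    · by_cases c2 : g w1 = 0
      · refine ⟨f + g, ?_, by simpa [c2] using hf1, by simpa [c1] using hg1⟩
        intro x hx
        have := hf hx
        have := hg hx
        simp_all
      · exact ⟨g, hg, c2, hg1⟩
    · exact ⟨f, hf, hf1, c1⟩
  have hℓa : ℓ a = 0 := hℓS (Submodule.subset_span (by simp))
  have hℓp1 : ℓ p1 = 0 := hℓS (Submodule.subset_span (by simp))
  have hℓp2 : ℓ p2 = 0 := hℓS (Submodule.subset_span (by simp))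
  obtain ⟨W, hWr, haW, hW⟩ := hcov ℓ (fun h => hℓ1 (by simp [h])) hℓa
  have hWT : ∀ y ∈ W, gr F a y = 0 ∧ l1 y * l2 y = 0 := fun y hy => by
    have := line_of_sub haW hy (fun y hy => (hW y hy).2)
    exact ⟨this.1, by rw [← hl y this.1, this.2.1]⟩
  have hor : (∀ y ∈ W, l1 y = 0) ∨ (∀ y ∈ W, l2 y = 0) := by
    by_contra! h
    obtain ⟨⟨y, hy, hy1⟩, ⟨z, hz, hz1⟩⟩ := h
    have e1 := (hWT y hy).2
    have e2 := (hWT z hz).2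
    have e3 := (hWT _ (W.add_mem hy hz)).2
    have y2 : l2 y = 0 := by simpa [hy1] using e1
    have z2 : l1 z = 0 := by simpa [hz1] using e2
    simp [y2, z2, hy1, hz1] at e3
  rcases hor with h | h
  · have h5 := finrank_inf_ker W1 ℓ ⟨w1, hw1, hℓ1⟩
    have := Submodule.eq_of_le_of_finrank_eq (S₁ := W) (S₂ := W1 ⊓ LinearMap.ker ℓ)
      (fun y hy => ⟨⟨(hWT y hy).1, h y hy⟩, (hW y hy).1⟩) (by omega)
    exact hF1 (hW p1 (this ▸ ⟨hp1, hℓp1⟩)).2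
  · have h5 := finrank_inf_ker W2 ℓ ⟨w2, hw2, hℓ2⟩
    have := Submodule.eq_of_le_of_finrank_eq (S₁ := W) (S₂ := W2 ⊓ LinearMap.ker ℓ)
      (fun y hy => ⟨⟨(hWT y hy).1, h y hy⟩, (hW y hy).1⟩) (by omega)
    exact hF2 (hW p2 (this ▸ ⟨hp2, hℓp2⟩)).2
end


lemma noTriple5 {k : Type*} [Field k] [IsAlgClosed k] [CharZero k] {n d : ℕ}
    {F : MvPolynomial (Fin (n + 1)) k}
    (hn : 5 ≤ n) (hhom : F.IsHomogeneous d) (a : Fin (n + 1) → k) (hFa : eval a F = 0)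
    (hcov : ∀ ℓ : (Fin (n + 1) → k) →ₗ[k] k, ℓ ≠ 0 → ℓ a = 0 →
      ∃ W : Submodule k (Fin (n + 1) → k), Module.finrank k W = n - 2 ∧ a ∈ W ∧
        ∀ y ∈ W, ℓ y = 0 ∧ eval y F = 0)
    (hg : gr F a ≠ 0)
    (e1 e2 e3) (h1 : gr F a e1 = 0) (h2 : gr F a e2 = 0) (h3 : gr F a e3 = 0)
    (h11 : bl F a e1 e1 = 1) (h22 : bl F a e2 e2 = 1) (h33 : bl F a e3 e3 = 1)
    (h12 : bl F a e1 e2 = 0) (h13 : bl F a e1 e3 = 0) (h23 : bl F a e2 e3 = 0) : False := by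
  classical
  set T := LinearMap.ker (gr F a) with hT
  have hTr : Module.finrank k T = n := by
    obtain ⟨v, hv⟩ : ∃ v, gr F a v ≠ 0 := by
      by_contra! h
      exact hg (LinearMap.ext h)
    have := finrank_inf_ker ⊤ (gr F a) ⟨v, trivial, hv⟩
    rw [top_inf_eq, finrank_top] at this
    simpa using this
  obtain ⟨w, hw, hws⟩ : ∃ w ∈ T, w ∉ Submodule.span k {a, e1, e2, e3} := by
    by_contra! h
    have h5 := Submodule.finrank_mono (show T ≤ _ from h)
    have h6 := finrank_span_le_card (R := k) ({a, e1, e2, e3} : Set (Fin (n + 1) → k))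
    have h7 : ({a, e1, e2, e3} : Set (Fin (n + 1) → k)).toFinset.card ≤ 4 := by
      simp only [Set.toFinset_insert, Set.toFinset_singleton]
      exact Finset.card_le_four
    omega
  obtain ⟨ℓ, hℓw, hℓS⟩ := Submodule.exists_le_ker_of_notMem hws
  have hℓa : ℓ a = 0 := hℓS (Submodule.subset_span (by simp))
  have hℓ1 : ℓ e1 = 0 := hℓS (Submodule.subset_span (by simp))
  have hℓ2 : ℓ e2 = 0 := hℓS (Submodule.subset_span (by simp))
  have hℓ3 : ℓ e3 = 0 := hℓS (Submodule.subset_span (by simp))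
  obtain ⟨W, hWr, haW, hW⟩ := hcov ℓ (fun h => hℓw (by simp [h])) hℓa
  have hWT : ∀ y ∈ W, gr F a y = 0 ∧ bl F a y y = 0 := fun y hy => by
    have := line_of_sub haW hy (fun y hy => (hW y hy).2)
    exact ⟨this.1, this.2.1⟩
  have hr := finrank_inf_ker T ℓ ⟨w, hw, hℓw⟩
  set T' := T ⊓ LinearMap.ker ℓ with hT'
  have hle : W ≤ T' := fun y hy => ⟨(hWT y hy).1, (hW y hy).1⟩
  obtain ⟨t, ht, htW⟩ : ∃ t ∈ T', t ∉ W := by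
    by_contra! h
    have := Submodule.finrank_mono (show T' ≤ W from h)
    omega
  obtain ⟨m, hmt, hmW⟩ := Submodule.exists_le_ker_of_notMem htW
  have hr2 := finrank_inf_ker T' m ⟨t, ht, hmt⟩
  have hWe : W = T' ⊓ LinearMap.ker m :=
    Submodule.eq_of_le_of_finrank_eq (le_inf hle hmW) (by omega)
  have mem : ∀ y, gr F a y = 0 → ℓ y = 0 → m y = 0 → bl F a y y = 0 := by
    intro y a1 a2 a3
    exact (hWT y (hWe ▸ ⟨⟨a1, a2⟩, a3⟩)).2
  have h21 : bl F a e2 e1 = 0 := by rw [bl_symm, h12]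
  have h31 : bl F a e3 e1 = 0 := by rw [bl_symm, h13]
  have h32 : bl F a e3 e2 = 0 := by rw [bl_symm, h23]
  have q1 := mem (m e2 • e1 - m e1 • e2) (by simp [h1, h2]) (by simp [hℓ1, hℓ2])
    (by simp [mul_comm])
  have q2 := mem (m e3 • e2 - m e2 • e3) (by simp [h3, h2]) (by simp [hℓ3, hℓ2])
    (by simp [mul_comm])
  have q3 := mem (m e3 • e1 - m e1 • e3) (by simp [h3, h1]) (by simp [hℓ3, hℓ1])
    (by simp [mul_comm])
  simp [bl_sub, bl_smul, h11, h22, h33, h12, h13, h23, h21, h31, h32] at q1 q2 q3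
  have : (m e1) ^ 2 = 0 := by
    have : (2 : k) * (m e1) ^ 2 = 0 := by linear_combination q1 + q3 - q2
    simpa using this
  have := mem e1 h1 hℓ1 (by simpa using this)
  rw [h11] at this
  exact one_ne_zero this


attribute [local instance] MvPolynomial.gradedAlgebra in
lemma elim0 {k R τ : Type*} [Field k] [IsAlgClosed k] [CommRing R] [Fintype τ]
    (G : Set (MvPolynomial τ R)) (hG : ∀ g ∈ G, ∃ m, g.IsHomogeneous m) (ev : R →+* k)
    (hs : Function.Surjective ev)
    (h0 : ∀ p : τ → k, (∀ g ∈ G, eval₂ ev p g = 0) → p = 0) :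
    ∃ r : R, ev r = 1 ∧ ∃ N, ∀ i, C r * X i ^ N ∈ Ideal.span G := by
  classical
  set J := (Ideal.span G).map (map ev : MvPolynomial τ R →+* MvPolynomial τ k) with hJ
  have hrad : idealOfVars τ k ≤ J.radical := by
    rw [← vanishingIdeal_zeroLocus_eq_radical (K := k), idealOfVars, Ideal.span_le]
    rintro _ ⟨i, rfl⟩
    intro p hp
    have : p = 0 := h0 p (fun g hg => by
      have := hp _ (Ideal.mem_map_of_mem _ (Ideal.subset_span hg))
      rw [aeval_eq_eval] at this
      rw [← this]
      simp [eval_map])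
    simp [this]
  obtain ⟨N, hN⟩ := Ideal.exists_pow_le_of_le_radical_of_fg hrad (idealOfVars_fg τ k)
  have hhomI : (Ideal.span G).IsHomogeneous (homogeneousSubmodule τ R) :=
    Ideal.homogeneous_span _ _ (fun g hg => by
      obtain ⟨m, hm⟩ := hG g hg
      exact ⟨m, hm⟩)
  let M := MvPolynomial τ R ⧸ (Ideal.span G).restrictScalars R
  let π : MvPolynomial τ R →ₗ[R] M := ((Ideal.span G).restrictScalars R).mkQ
  let Q : Submodule R M := (homogeneousSubmodule τ R N).map π
  have hQfg : Q.FG := (homogeneousSubmodule_fg τ R N).map π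
  have hsub : Q ≤ RingHom.ker ev • Q := by
    rintro _ ⟨q, hq, rfl⟩
    have hq' : q.IsHomogeneous N := hq
    have h1 : map ev q ∈ J := by
      apply hN
      rw [mem_pow_idealOfVars_iff]
      intro x hx
      have := (hq'.map ev) (mem_support_iff.1 hx)
      rw [← this, Finsupp.degree_eq_weight_one]; rfl
    obtain ⟨s, hsG, hse⟩ := (Ideal.mem_map_iff_of_surjective _ (map_surjective ev hs)).1 h1
    set s' := homogeneousComponent N s with hs'
    have hs'G : s' ∈ Ideal.span G := (mem_iff_homogeneousComponent_mem hhomI s).1 hsG N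
    have hs'e : map ev s' = map ev q := by
      ext x
      have e1 := congrArg (coeff x) hse
      simp only [coeff_map, hs', coeff_homogeneousComponent] at e1 ⊢
      split_ifs with hx
      · exact e1
      · have : coeff x q = 0 := by
          apply hq'.coeff_eq_zero hx
        simp [this]
    have hπ : π q = π (q - s') := by
      rw [map_sub, eq_comm, sub_eq_self]
      exact (Submodule.Quotient.mk_eq_zero _).2 hs'G
    rw [hπ]
    have hh : (q - s').IsHomogeneous N := hq'.sub (homogeneousComponent_isHomogeneous N s)
    rw [(q - s').as_sum, map_sum]
    refine Submodule.sum_mem _ fun x hx => ?_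
    have : monomial x (coeff x (q - s')) = coeff x (q - s') • monomial x (1 : R) := by
      simp [smul_monomial]
    rw [this, map_smul]
    refine Submodule.smul_mem_smul ?_ ⟨_, ?_, rfl⟩
    · have := congrArg (coeff x) hs'e
      simp only [coeff_map] at this
      simp [RingHom.mem_ker, this]
    · have := hh (mem_support_iff.1 hx)
      exact isHomogeneous_monomial _ (by rw [← this, Finsupp.degree_eq_weight_one]; rfl)
  obtain ⟨r, hr1, hr⟩ := Submodule.exists_sub_one_mem_and_smul_eq_zero_of_fg_of_le_smul _ Q hQfg hsub
  refine ⟨r, ?_, N, fun i => ?_⟩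
  · simpa [RingHom.mem_ker, sub_eq_zero] using hr1
  · have := hr (π (X i ^ N)) ⟨_, (isHomogeneous_X_pow i N), rfl⟩
    rw [← map_smul] at this
    have := (Submodule.Quotient.mk_eq_zero _).1 this
    rw [smul_eq_C_mul] at this
    exact this


lemma generic_pt {k σ : Type*} [Field k] [IsAlgClosed k] [Finite σ] {F u : MvPolynomial σ k}
    (hF : Irreducible F) (hu : ¬ F ∣ u) : ∃ a, eval a F = 0 ∧ eval a u ≠ 0 := by
  by_contra! h
  have hp : (Ideal.span {F}).IsPrime :=
    (Ideal.span_singleton_prime hF.ne_zero).2 (UniqueFactorizationMonoid.irreducible_iff_prime.1 hF)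
  have : u ∈ vanishingIdeal k (zeroLocus k (Ideal.span {F})) := by
    intro x hx
    rw [aeval_eq_eval]
    have h1 := hx F (Ideal.mem_span_singleton_self F)
    rw [aeval_eq_eval] at h1
    exact h x h1
  rw [IsPrime.vanishingIdeal_zeroLocus] at this
  exact hu (Ideal.mem_span_singleton.1 this)

/-- Alternating pairing associated with a matrix. -/
noncomputable def Pp {k R σ : Type*} [Field k] [CommRing R] [Algebra k R] [Fintype σ]
    (p : σ × σ → R) (a b : σ → k) : R :=
  ∑ i, ∑ j, algebraMap k R (a i * b j) * p (i, j)

/-- The vector `P(a,b)c+P(b,c)a+P(c,a)b`. -/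
noncomputable def Yp {k R σ : Type*} [Field k] [CommRing R] [Algebra k R] [Fintype σ]
    (p : σ × σ → R) (a b c : σ → k) (i : σ) : R :=
  Pp p a b * algebraMap k R (c i) + Pp p b c * algebraMap k R (a i) + Pp p c a * algebraMap k R (b i)

lemma Pp_map {k R S σ : Type*} [Field k] [CommRing R] [Algebra k R] [CommRing S] [Algebra k S]
    [Fintype σ] (f : R →ₐ[k] S) (p : σ × σ → R) (a b : σ → k) :
    f (Pp p a b) = Pp (fun i => f (p i)) a b := by
  simp [Pp]

lemma Yp_map {k R S σ : Type*} [Field k] [CommRing R] [Algebra k R] [CommRing S] [Algebra k S]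
    [Fintype σ] (f : R →ₐ[k] S) (p : σ × σ → R) (a b c : σ → k) (i : σ) :
    f (Yp p a b c i) = Yp (fun i => f (p i)) a b c i := by
  simp [Yp, Pp_map]

lemma closure_lem {k : Type*} [Field k] [IsAlgClosed k] {n d : ℕ} (hn : 2 ≤ n)
    {F u : MvPolynomial (Fin (n + 1)) k} (hhom : F.IsHomogeneous d)
    (hF : Irreducible F) (hu : ¬ F ∣ u)
    (H : ∀ a, eval a F = 0 → eval a u ≠ 0 →
      ∃ W : Submodule k (Fin (n + 1) → k), Module.finrank k W = n - 1 ∧ a ∈ W ∧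
        ∀ y ∈ W, eval y F = 0)
    (x : Fin (n + 1) → k) (hx : eval x F = 0) :
    ∃ W : Submodule k (Fin (n + 1) → k), Module.finrank k W = n - 1 ∧ x ∈ W ∧
        ∀ y ∈ W, eval y F = 0 := by
  classical
  let G : Set (MvPolynomial (Fin (n + 1) × Fin (n + 1)) (MvPolynomial (Fin (n + 1)) k)) :=
    {g | ∃ i j, g = X (i, j) + X (j, i)} ∪ {g | ∃ i, g = X (i, i)} ∪
    Set.range (fun c : Fin (n + 1) => ∑ j : Fin (n + 1), X (c, j) * C (X j : MvPolynomial (Fin (n + 1)) k)) ∪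
    {g | ∃ a b c : Fin (n + 1) → k, g = aeval (Yp (R := MvPolynomial (Fin (n + 1) × Fin (n + 1)) (MvPolynomial (Fin (n + 1)) k)) (fun i => X i) a b c) F}
  let evl : ∀ (x : Fin (n + 1) → k) (p : Fin (n + 1) × Fin (n + 1) → k), MvPolynomial (Fin (n + 1) × Fin (n + 1)) (MvPolynomial (Fin (n + 1)) k) →ₐ[k] k := fun x p =>
    (aeval (R := k) p : MvPolynomial (Fin (n + 1) × Fin (n + 1)) k →ₐ[k] k).comp
      (mapAlgHom (aeval x : (MvPolynomial (Fin (n + 1)) k) →ₐ[k] k))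
  have hevl : ∀ x p g, eval₂ (eval x) p g = evl x p g := by
    intro x p g
    simp [evl, aeval_eq_eval, eval_map]
  have evlX : ∀ x p i, evl x p (X i) = p i := by intro x p i; simp [evl]
  have evlC : ∀ x p q, evl x p (C q) = eval x q := by
    intro x p q; simp [evl]
  have hz : ∀ (x : Fin (n + 1) → k) (p : Fin (n + 1) × Fin (n + 1) → k), (∀ g ∈ G, eval₂ (eval x) p g = 0) ↔
      ((∀ i j, p (i, j) + p (j, i) = 0) ∧ (∀ i, p (i, i) = 0) ∧
       (∀ c, ∑ j, p (c, j) * x j = 0) ∧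
       (∀ a b c : Fin (n + 1) → k, eval (Yp p a b c) F = 0)) := by
    intro x p
    have hY : ∀ a b c : Fin (n + 1) → k, evl x p (aeval (Yp (R := MvPolynomial (Fin (n + 1) × Fin (n + 1)) (MvPolynomial (Fin (n + 1)) k)) (fun i => X i) a b c) F) =
        eval (Yp p a b c) F := by
      intro a b c
      have := comp_aeval_apply (φ := evl x p) (f := Yp (R := MvPolynomial (Fin (n + 1) × Fin (n + 1)) (MvPolynomial (Fin (n + 1)) k)) (fun i => X i) a b c) F
      rw [this, aeval_eq_eval]
      simp only [Yp_map, evlX]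
    constructor
    · intro h
      refine ⟨fun i j => ?_, fun i => ?_, fun c => ?_, fun a b c => ?_⟩
      · have := h (X (i, j) + X (j, i)) (Or.inl (Or.inl (Or.inl ⟨i, j, rfl⟩)))
        rw [hevl] at this
        simpa [evlX] using this
      · have := h (X (i, i)) (Or.inl (Or.inl (Or.inr ⟨i, rfl⟩)))
        rw [hevl] at this
        simpa [evlX] using this
      · have := h _ (Or.inl (Or.inr ⟨c, rfl⟩))
        rw [hevl] at this
        simpa [evlX, evlC] using this
      · have := h _ (Or.inr ⟨a, b, c, rfl⟩)
        rw [hevl, hY] at this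
        exact this
    · rintro ⟨h1, h2, h3, h4⟩ g (((⟨i, j, rfl⟩ | ⟨i, rfl⟩) | ⟨c, rfl⟩) | ⟨a, b, c, rfl⟩) <;>
        rw [hevl]
      · simpa [evlX] using h1 i j
      · simpa [evlX] using h2 i
      · simpa [evlX, evlC] using h3 c
      · rw [hY]; exact h4 a b c
  have hGh : ∀ g ∈ G, ∃ m, g.IsHomogeneous m := by
    have hP : ∀ a b : Fin (n + 1) → k, (Pp (R := MvPolynomial (Fin (n + 1) × Fin (n + 1)) (MvPolynomial (Fin (n + 1)) k)) (fun i => X i) a b).IsHomogeneous 1 := by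
      intro a b
      refine IsHomogeneous.sum _ _ _ fun i _ => IsHomogeneous.sum _ _ _ fun j _ => ?_
      rw [IsScalarTower.algebraMap_apply k (MvPolynomial (Fin (n + 1)) k)]
      exact (isHomogeneous_X _ _).C_mul _
    rintro g (((⟨i, j, rfl⟩ | ⟨i, rfl⟩) | ⟨c, rfl⟩) | ⟨a, b, c, rfl⟩)
    · exact ⟨1, (isHomogeneous_X _ _).add (isHomogeneous_X _ _)⟩
    · exact ⟨1, isHomogeneous_X _ _⟩
    · refine ⟨1, IsHomogeneous.sum _ _ _ fun j _ => ?_⟩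
      exact (isHomogeneous_X (MvPolynomial (Fin (n + 1)) k) (c, j)).mul (isHomogeneous_C _ (X j : MvPolynomial (Fin (n + 1)) k))
    · refine ⟨1 * d, IsHomogeneous.eval₂ hhom (algebraMap k (MvPolynomial (Fin (n + 1) × Fin (n + 1)) (MvPolynomial (Fin (n + 1)) k))) _ ?_ ?_⟩
      · intro r
        rw [IsScalarTower.algebraMap_apply k (MvPolynomial (Fin (n + 1)) k)]
        exact isHomogeneous_C _ _
      · intro i
        have hC : ∀ c : k, (algebraMap k (MvPolynomial (Fin (n + 1) × Fin (n + 1)) (MvPolynomial (Fin (n + 1)) k)) c).IsHomogeneous 0 := by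
          intro r
          rw [IsScalarTower.algebraMap_apply k (MvPolynomial (Fin (n + 1)) k)]
          exact isHomogeneous_C _ _
        exact (((hP _ _).mul (hC _)).add ((hP _ _).mul (hC _))).add ((hP _ _).mul (hC _))
  -- evaluation of the pairing
  have hPsingle : ∀ (p : Fin (n + 1) × Fin (n + 1) → k) i b, Pp p (Pi.single i (1 : k)) b = ∑ j, p (i, j) * b j := by
    intro p i b
    simp [Pp, Pi.single_apply, mul_comm]
  by_contra hcon
  obtain ⟨r, hr1, N, hr⟩ := elim0 G hGh (eval x) (fun c => ⟨C c, by simp⟩) (by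
    intro p hp
    obtain ⟨h1, h2, h3, h4⟩ := (hz x p).1 hp
    by_contra hp0
    obtain ⟨⟨i0, j0⟩, hij⟩ := Function.ne_iff.1 hp0
    simp only [Pi.zero_apply] at hij
    apply hcon
    let l : Fin (n + 1) → ((Fin (n + 1) → k) →ₗ[k] k) := fun i => ∑ j, p (i, j) • LinearMap.proj j
    have hl : ∀ i b, l i b = ∑ j, p (i, j) * b j := by intro i b; simp [l]
    have hls : ∀ i j, l i (Pi.single j 1) = p (i, j) := by
      intro i j; simp [hl, Pi.single_apply]
    have hPs : ∀ b c : Fin (n + 1) → k, Pp p b c = - Pp p c b := by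
      intro b c
      rw [Pp, Pp, Finset.sum_comm, ← Finset.sum_neg_distrib]
      refine Finset.sum_congr rfl fun i _ => ?_
      rw [← Finset.sum_neg_distrib]
      refine Finset.sum_congr rfl fun j _ => ?_
      rw [eq_neg_of_add_eq_zero_left (h1 j i)]
      simp [mul_comm (b j)]
    have r1 := finrank_inf_ker ⊤ (l i0) ⟨Pi.single j0 1, trivial, by rw [hls]; exact hij⟩
    have r2 := finrank_inf_ker (⊤ ⊓ LinearMap.ker (l i0)) (l j0) ⟨Pi.single i0 1, 
      ⟨trivial, by change l i0 _ = 0; rw [hls, h2]⟩, by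
        rw [hls, eq_neg_of_add_eq_zero_left (h1 j0 i0)]; simpa using hij⟩
    rw [finrank_top] at r1
    simp only [Module.finrank_fintype_fun_eq_card, Fintype.card_fin] at r1
    have hmem : ∀ y, y ∈ ⊤ ⊓ LinearMap.ker (l i0) ⊓ LinearMap.ker (l j0) ↔ l i0 y = 0 ∧ l j0 y = 0 := by
      intro y; simp
    refine ⟨⊤ ⊓ LinearMap.ker (l i0) ⊓ LinearMap.ker (l j0), by omega, ?_, ?_⟩
    · rw [hmem, hl, hl]; exact ⟨h3 _, h3 _⟩
    · intro y hy
      rw [hmem] at hy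
      have := h4 (Pi.single i0 1) (Pi.single j0 1) ((p (i0, j0))⁻¹ • y)
      have e1 : Pp p (Pi.single j0 (1 : k)) ((p (i0, j0))⁻¹ • y) = 0 := by
        rw [hPsingle, ← hl, map_smul, hy.2, smul_zero]
      have e2 : Pp p ((p (i0, j0))⁻¹ • y) (Pi.single i0 (1 : k)) = 0 := by
        rw [hPs, hPsingle, ← hl, map_smul, hy.1, smul_zero, neg_zero]
      have e3 : Pp p (Pi.single i0 (1 : k)) (Pi.single j0 1) = p (i0, j0) := by
        rw [hPsingle, ← hl, hls]
      have e4 : Yp p (Pi.single i0 (1 : k)) (Pi.single j0 1) ((p (i0, j0))⁻¹ • y) = y := by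
        funext i
        simp [Yp, e1, e2, e3, hij]
      rwa [e4] at this)
  have hru : ¬ F ∣ r * u := by
    intro h
    rcases (UniqueFactorizationMonoid.irreducible_iff_prime.1 hF).dvd_or_dvd h with h | h
    · obtain ⟨q, rfl⟩ := h
      rw [map_mul, hx, zero_mul] at hr1
      exact zero_ne_one hr1
    · exact hu h
  obtain ⟨a, ha, hau⟩ := generic_pt hF hru
  rw [map_mul] at hau
  obtain ⟨W, hWr, haW, hW⟩ := H a ha (right_ne_zero_of_mul hau)
  -- the functionals cutting out W
  obtain ⟨t, ht⟩ : ∃ t, t ∉ W := by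
    by_contra! h
    have : W = ⊤ := by ext; simp [h]
    rw [this, finrank_top] at hWr
    simp at hWr
    omega
  obtain ⟨l, hlt, hlW⟩ := Submodule.exists_le_ker_of_notMem ht
  have r1 := finrank_inf_ker ⊤ l ⟨t, trivial, hlt⟩
  rw [finrank_top, top_inf_eq] at r1
  simp only [Module.finrank_fintype_fun_eq_card, Fintype.card_fin] at r1
  obtain ⟨s, hsl, hs⟩ : ∃ s ∈ LinearMap.ker l, s ∉ W := by
    by_contra! h
    have := Submodule.finrank_mono (show LinearMap.ker l ≤ W from h)
    omega
  obtain ⟨m, hms, hmW⟩ := Submodule.exists_le_ker_of_notMem hs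
  have r2 := finrank_inf_ker (LinearMap.ker l) m ⟨s, hsl, hms⟩
  have hWe : W = LinearMap.ker l ⊓ LinearMap.ker m :=
    Submodule.eq_of_le_of_finrank_eq (le_inf hlW hmW) (by omega)
  let p : Fin (n + 1) × Fin (n + 1) → k := fun ij => l (Pi.single ij.1 1) * m (Pi.single ij.2 1) -
    l (Pi.single ij.2 1) * m (Pi.single ij.1 1)
  have hexp : ∀ (f : (Fin (n + 1) → k) →ₗ[k] k) b, f b = ∑ i, b i * f (Pi.single i 1) := by
    intro f b
    conv_lhs => rw [pi_eq_sum_univ' b]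
    simp only [map_sum, map_smul, smul_eq_mul]
  have hPp : ∀ b c : Fin (n + 1) → k, Pp p b c = l b * m c - l c * m b := by
    intro b c
    rw [hexp l b, hexp m c, hexp l c, hexp m b, Finset.sum_mul_sum, Finset.sum_mul_sum,
      Finset.sum_comm (f := fun i j => c i * l (Pi.single i 1) * (b j * m (Pi.single j 1))),
      ← Finset.sum_sub_distrib, Pp]
    refine Finset.sum_congr rfl fun i _ => ?_
    rw [← Finset.sum_sub_distrib]
    refine Finset.sum_congr rfl fun j _ => ?_
    simp [p]; ring
  have hzero := (hz a p).2 ⟨fun i j => by simp [p], fun i => by simp [p], fun c => by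
    rw [← hPsingle, hPp, show l a = 0 from hlW haW, show m a = 0 from hmW haW]; simp, fun b c e => by
    apply hW
    rw [hWe]
    have : Yp p b c e = Pp p b c • e + Pp p c e • b + Pp p e b • c := by
      funext i; simp [Yp]
    rw [this]
    constructor
    · simp only [SetLike.mem_coe, LinearMap.mem_ker, map_add, map_smul, smul_eq_mul, hPp]; ring
    · simp only [SetLike.mem_coe, LinearMap.mem_ker, map_add, map_smul, smul_eq_mul, hPp]; ring⟩
  have hp0 : p ≠ 0 := by
    intro h
    have h1 := hPp t s
    rw [h, show l s = 0 from hsl] at h1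
    simp [Pp, hlt, hms] at h1
  obtain ⟨i, hi⟩ := Function.ne_iff.1 hp0
  have hle : Ideal.span G ≤ RingHom.ker (evl a p) := by
    rw [Ideal.span_le]
    intro g hg
    change evl a p g = 0
    rw [← hevl]; exact hzero g hg
  have := hle (hr i)
  rw [RingHom.mem_ker, map_mul, map_pow, evlX, evlC] at this
  exact mul_ne_zero (left_ne_zero_of_mul hau) (pow_ne_zero N hi) this



lemma existK {k : Type u} [Field k] [IsAlgClosed k] [CharZero k] {m : ℕ}
    {F : MvPolynomial (Fin m) k} (hF : Irreducible F) :
    ∃ (K : Type u) (_ : Field K) (_ : Algebra k K) (ι : MvPolynomial (Fin m) k →ₐ[k] K),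
      (∀ p, ι p = 0 ↔ F ∣ p) ∧
      (∀ ξ : Fin m → K, ∑ i, ι (pderiv i F) * ξ i = 0 →
        ∃ D : Derivation k K K, ∀ i, D (ι (X i)) = ξ i) ∧
      (∀ D : Derivation k K K, (∀ i, D (ι (X i)) = 0) → D = 0) ∧
      (∀ r : K, (∀ D : Derivation k K K, D r = 0) → ∃ c, algebraMap k K c = r) := by
  have hp : (Ideal.span {F}).IsPrime :=
    (Ideal.span_singleton_prime hF.ne_zero).2 (UniqueFactorizationMonoid.irreducible_iff_prime.1 hF)
  let A := MvPolynomial (Fin m) k ⧸ Ideal.span {F}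
  let K := FractionRing A
  let pr : MvPolynomial (Fin m) k →ₐ[k] A := Ideal.Quotient.mkₐ k _
  have hpr : Function.Surjective pr := Ideal.Quotient.mkₐ_surjective k _
  have hker : ∀ p, pr p = 0 ↔ F ∣ p := by
    intro p
    rw [← Ideal.mem_span_singleton]
    exact Ideal.Quotient.eq_zero_iff_mem
  have : Algebra.FiniteType k A := Algebra.FiniteType.of_surjective pr hpr
  have : Algebra.EssFiniteType A K := Algebra.EssFiniteType.of_isLocalization _ (nonZeroDivisors A)
  have hess : Algebra.EssFiniteType k K := Algebra.EssFiniteType.comp k A K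
  let ι : MvPolynomial (Fin m) k →ₐ[k] K := (IsScalarTower.toAlgHom k A K).comp pr
  refine ⟨K, inferInstance, inferInstance, ι, ?_, ?_, ?_, ?_⟩
  · intro p
    rw [← hker]
    exact IsFractionRing.to_map_eq_zero_iff (R := A) (K := K) (x := pr p)
  · intro ξ hξ
    exact exists_der F pr hpr hker ξ hξ
  · intro D hD
    have h1 : ∀ p, D (ι p) = 0 := by
      intro p
      have : ι = aeval (fun i => ι (X i)) := by ext i; simp
      rw [this, der_aeval]
      simp [hD]
    ext r
    obtain ⟨a, b, hb, rfl⟩ := IsFractionRing.div_surjective (A := A) r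
    obtain ⟨p, rfl⟩ := hpr a
    obtain ⟨q, rfl⟩ := hpr b
    have hq : ι q ≠ 0 := IsFractionRing.to_map_ne_zero_of_mem_nonZeroDivisors (R := A) (K := K) hb
    change D (ι p / ι q) = 0
    rw [Derivation.leibniz_div, h1, h1]
    simp
  · intro r hr
    exact const_of_der r hr

lemma not_dvd_deg {k σ : Type*} [Field k] {d : ℕ}
    {F p : MvPolynomial σ k} (hhom : F.IsHomogeneous d) (hF : F ≠ 0) (hp : p ≠ 0)
    (hd : p.totalDegree < d) : ¬ F ∣ p := by
  rintro ⟨q, rfl⟩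
  rw [totalDegree_mul_of_isDomain hF (right_ne_zero_of_mul hp), hhom.totalDegree hF] at hd
  omega

/-- The polynomial `B_x(ξ_i, ξ_j)`. -/
noncomputable def Bp {k σ : Type*} [Field k] (F : MvPolynomial σ k) (e i j : σ) : MvPolynomial σ k :=
  pderiv e F ^ 2 * pderiv i (pderiv j F) - pderiv e F * pderiv i F * pderiv e (pderiv j F)
    - pderiv e F * pderiv j F * pderiv e (pderiv i F) + pderiv i F * pderiv j F * pderiv e (pderiv e F)

lemma exists_pderiv_ne {k σ : Type*} [Field k] [CharZero k] [Fintype σ] {d : ℕ} (hd : d ≠ 0)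
    {F : MvPolynomial σ k} (hhom : F.IsHomogeneous d) (hF : F ≠ 0) : ∃ e, pderiv e F ≠ 0 := by
  by_contra! h
  have := hhom.sum_X_mul_pderiv
  simp [h] at this
  tauto

lemma der_poly {k σ K : Type*} [Field k] [Field K] [Algebra k K] [Fintype σ]
    (ι : MvPolynomial σ k →ₐ[k] K) (D : Derivation k K K) (p : MvPolynomial σ k) :
    D (ι p) = ∑ i, ι (pderiv i p) * D (ι (X i)) := by
  have : ι = aeval (fun i => ι (X i)) := by ext i; simp
  conv_lhs => rw [this]
  rw [der_aeval, ← this]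

lemma der_sum_apply {k σ K : Type*} [Field k] [Field K] [Algebra k K]
    (s : Finset σ) (D : σ → Derivation k K K) (r : K) : (∑ i ∈ s, D i) r = ∑ i ∈ s, D i r := by
  have := map_sum (Derivation.coeFnAddMonoidHom (R := k) (A := K) (M := K)) D s
  have h2 := congrFun this r
  rw [Finset.sum_apply] at h2
  exact h2

/-- The setup: derivations `D_i`. -/
structure Frame {k σ K : Type*} [Field k] [Field K] [Algebra k K] [Fintype σ] [DecidableEq σ]
    (F : MvPolynomial σ k) (ι : MvPolynomial σ k →ₐ[k] K) (e : σ) (D : σ → Derivation k K K)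
    (p : σ → K) : Prop where
  hFe : ι (pderiv e F) ≠ 0
  hp : ∀ i, p i * ι (pderiv e F) = - ι (pderiv i F)
  hD : ∀ i j, D i (ι (X j)) = (if i = j then 1 else 0) + (if e = j then p i else 0)
  hker : ∀ q, ι q = 0 ↔ F ∣ q
  ext : ∀ D : Derivation k K K, (∀ i, D (ι (X i)) = 0) → D = 0
  cst : ∀ r : K, (∀ D : Derivation k K K, D r = 0) → ∃ c, algebraMap k K c = r

lemma existFrame {k : Type u} [Field k] [IsAlgClosed k] [CharZero k] {m : ℕ}
    {F : MvPolynomial (Fin m) k} (hF : Irreducible F) (e : Fin m) (he : ¬ F ∣ pderiv e F) :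
    ∃ (K : Type u) (_ : Field K) (_ : Algebra k K) (ι : MvPolynomial (Fin m) k →ₐ[k] K)
      (D : Fin m → Derivation k K K) (p : Fin m → K), Frame F ι e D p := by
  obtain ⟨K, i1, i2, ι, h1, h2, h3, h4⟩ := existK hF
  have hFe : ι (pderiv e F) ≠ 0 := fun h => he ((h1 _).1 h)
  let p : Fin m → K := fun i => - ι (pderiv i F) / ι (pderiv e F)
  have hp : ∀ i, p i * ι (pderiv e F) = - ι (pderiv i F) := fun i => by
    simp only [p]; field_simp
  have : ∀ i, ∃ D : Derivation k K K, ∀ j, D (ι (X j)) =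
      (if i = j then 1 else 0) + (if e = j then p i else 0) := by
    intro i
    refine h2 _ ?_
    simp only [mul_add, Finset.sum_add_distrib, mul_ite, mul_one, mul_zero, Finset.sum_ite_eq,
      Finset.mem_univ, if_true]
    rw [mul_comm _ (p i), hp]; ring
  choose D hD using this
  exact ⟨K, i1, i2, ι, D, p, hFe, hp, hD, h1, h3, h4⟩

namespace Frame
variable {k σ K : Type*} [Field k] [Field K] [Algebra k K] [Fintype σ] [DecidableEq σ]
    {F : MvPolynomial σ k} {ι : MvPolynomial σ k →ₐ[k] K} {e : σ} {D : σ → Derivation k K K}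
    {p : σ → K} (H : Frame F ι e D p)
include H

lemma pe : p e = -1 := by
  have := H.hp e
  have h := H.hFe
  field_simp at this
  linear_combination this

lemma Dpoly (i : σ) (q : MvPolynomial σ k) : D i (ι q) = ι (pderiv i q) + p i * ι (pderiv e q) := by
  rw [der_poly]
  simp [H.hD, mul_add, Finset.sum_add_distrib]
  ring

lemma Dp (i j : σ) : D i (p j) * ι (pderiv e F) ^ 3 = - ι (Bp F e i j) := by
  have h1 := congrArg (D i) (H.hp j)
  rw [Derivation.leibniz, map_neg, H.Dpoly, H.Dpoly, smul_eq_mul, smul_eq_mul] at h1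
  have h2 := H.hp i
  have h3 := H.hp j
  simp only [Bp, map_add, map_sub, map_mul, map_pow]
  rw [pderiv_comm' i e] at h1
  have e1 : ι (pderiv i F) = - (p i * ι (pderiv e F)) := by rw [h2]; ring
  have e2 : ι (pderiv j F) = - (p j * ι (pderiv e F)) := by rw [h3]; ring
  rw [e1, e2]
  linear_combination (ι (pderiv e F)) ^ 2 * h1

lemma decomp (E : Derivation k K K) (r : K) : E r = ∑ i, E (ι (X i)) * D i r := by
  have h0 : ∑ i, p i * E (ι (X i)) = 0 := by
    have h1 := der_poly ι E F
    rw [(H.hker F).2 dvd_rfl, map_zero] at h1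
    have h2 : (∑ i, p i * E (ι (X i))) * ι (pderiv e F) = 0 := by
      rw [Finset.sum_mul, ← neg_eq_zero, ← Finset.sum_neg_distrib, h1]
      refine Finset.sum_congr rfl fun i _ => ?_
      linear_combination - E (ι (X i)) * H.hp i
    exact (mul_eq_zero.1 h2).resolve_right H.hFe
  have : E - ∑ i, E (ι (X i)) • D i = 0 := by
    apply H.ext
    intro j
    rw [Derivation.sub_apply, der_sum_apply]
    simp only [Derivation.smul_apply, H.hD, smul_eq_mul, mul_add, Finset.sum_add_distrib,
      mul_ite, mul_one, mul_zero, Finset.sum_ite_eq', Finset.mem_univ, if_true]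
    split_ifs with h
    · rw [← h] 
      have : ∑ i, E (ι (X i)) * p i = 0 := by rw [← h0]; simp [mul_comm]
      rw [this]; ring
    · simp
  have h2 := congrArg (fun E => E r) this
  simp only [Derivation.sub_apply, der_sum_apply, Derivation.smul_apply, smul_eq_mul,
    Derivation.zero_apply] at h2
  linear_combination h2

lemma cst' (r : K) (h : ∀ i, D i r = 0) : ∃ c, algebraMap k K c = r := by
  apply H.cst
  intro E
  rw [H.decomp E r]
  simp [h]

lemma comm (i j : σ) (r : K) : D i (D j r) = D j (D i r) := by
  have hsym : D i (p j) = D j (p i) := by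
    have h1 := H.Dp i j
    have h2 := H.Dp j i
    have : Bp F e i j = Bp F e j i := by
      simp only [Bp, pderiv_comm' i j]; ring
    rw [this, ← h2] at h1
    exact mul_right_cancel₀ (pow_ne_zero 3 H.hFe) h1
  have : ⁅D i, D j⁆ = 0 := by
    apply H.ext
    intro l
    rw [Derivation.commutator_apply, H.hD, H.hD, map_add, map_add]
    have : ∀ (E : Derivation k K K) (P : Prop) [Decidable P], E (if P then (1 : K) else 0) = 0 := by
      intro E P _; split_ifs <;> simp
    rw [this, this]
    split_ifs
    · simp [hsym]
    · simp
  have h2 := congrArg (fun E => E r) this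
  simp only [Derivation.commutator_apply, Derivation.zero_apply] at h2
  exact sub_eq_zero.1 h2

lemma exists_B {d : ℕ} (hd : 2 ≤ d) (hhom : F.IsHomogeneous d) (hF : F ≠ 0) :
    ∃ i j, ¬ F ∣ Bp F e i j := by
  by_contra! h
  have h1 : ∀ i j, D i (p j) = 0 := by
    intro i j
    have := H.Dp i j
    rw [(H.hker _).2 (h i j), neg_zero] at this
    exact (mul_eq_zero.1 this).resolve_right (pow_ne_zero 3 H.hFe)
  have h2 : ∀ j, ∃ c, algebraMap k K c = p j := fun j => H.cst' _ (fun i => h1 i j)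
  choose c hc using h2
  obtain ⟨c0, hc0⟩ := H.cst' (ι (∑ j, C (c j) * X j)) (by
    intro i
    rw [H.Dpoly]
    have : ∀ i, pderiv i (∑ j, C (c j) * X j) = C (c i) := by
      intro i
      simp [pderiv_X, Pi.single_apply]
    rw [this, this]
    have hC : ∀ c, ι (C c) = algebraMap k K c := fun c => ι.commutes c
    rw [hC, hC, hc, hc, H.pe]; ring)
  have h3 : F ∣ (∑ j, C (c j) * X j - C c0) := by
    rw [← H.hker, map_sub, ← hc0]
    rw [sub_eq_zero]; exact (ι.commutes c0).symm
  refine not_dvd_deg hhom hF ?_ ?_ h3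
  · intro h0
    have := congrArg (pderiv e) h0
    simp [pderiv_X, Pi.single_apply] at this
    have h4 := hc e
    rw [this, H.pe] at h4
    simp at h4
  · refine lt_of_le_of_lt (b := 1) ?_ (by omega)
    refine (totalDegree_sub_C_le _ _).trans ?_
    refine totalDegree_finsetSum_le fun j _ => ?_
    refine (totalDegree_mul _ _).trans ?_
    simp
end Frame


section xi
variable {k σ : Type*} [Field k] [Fintype σ] [DecidableEq σ]

lemma gr_single (F : MvPolynomial σ k) (a : σ → k) (i : σ) :
    gr F a (Pi.single i 1) = eval a (pderiv i F) := by
  rw [gr_apply]; simp [Pi.single_apply]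

lemma bl_single (F : MvPolynomial σ k) (a : σ → k) (i j : σ) :
    bl F a (Pi.single i 1) (Pi.single j 1) = eval a (pderiv i (pderiv j F)) := by
  rw [bl_apply]; simp [Pi.single_apply]

/-- tangent vectors -/
noncomputable def xi (F : MvPolynomial σ k) (e : σ) (a : σ → k) (i : σ) : σ → k :=
  eval a (pderiv e F) • Pi.single i 1 - eval a (pderiv i F) • Pi.single e 1

lemma gr_xi (F : MvPolynomial σ k) (e : σ) (a : σ → k) (i : σ) : gr F a (xi F e a i) = 0 := by
  simp only [xi, map_sub, map_smul, gr_single, smul_eq_mul]; ring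

lemma bl_xi (F : MvPolynomial σ k) (e : σ) (a : σ → k) (i j : σ) :
    bl F a (xi F e a i) (xi F e a j) = eval a (Bp F e i j) := by
  simp only [xi, bl_sub, bl_smul, map_sub, map_smul, bl_single, smul_eq_mul, Bp, map_add, map_mul,
    map_pow, pderiv_comm' i e F]
  ring

lemma xi_decomp (F : MvPolynomial σ k) (e : σ) (a y : σ → k) (hy : gr F a y = 0) :
    eval a (pderiv e F) • y = ∑ i, y i • xi F e a i := by
  ext j
  have h : ∑ i, y i * eval a (pderiv i F) = 0 := by
    rw [← hy, gr_apply]; exact Finset.sum_congr rfl fun i _ => by ring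
  simp only [xi, Finset.sum_apply, Pi.smul_apply, Pi.sub_apply, smul_eq_mul, mul_sub,
    Finset.sum_sub_distrib, ← mul_assoc, ← Finset.sum_mul, h, zero_mul, sub_zero]
  simp [Pi.single_apply]
  ring
end xi

lemma assemble {k : Type*} [Field k] [IsAlgClosed k] [CharZero k] {n d : ℕ} (hn : 4 ≤ n)
    (hd : 2 ≤ d) {F : MvPolynomial (Fin (n + 1)) k} (hhom : F.IsHomogeneous d) (hF : Irreducible F)
    (hcov : ∀ ℓ : (Fin (n+1) → k) →ₗ[k] k, ℓ ≠ 0 → ∀ x : Fin (n+1) → k, x ≠ 0 → eval x F = 0 →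
      ℓ x = 0 → ∃ W : Submodule k (Fin (n+1) → k), Module.finrank k W = n-2 ∧ x ∈ W ∧
        ∀ y ∈ W, ℓ y = 0 ∧ eval y F = 0)
    (e : Fin (n + 1)) (he : ¬ F ∣ pderiv e F) (i j : Fin (n + 1)) (hB : ¬ F ∣ Bp F e i j)
    (u0 : MvPolynomial (Fin (n + 1)) k) (hu0 : ¬ F ∣ u0)
    (h3 : ∀ a, a ≠ 0 → eval a F = 0 → eval a u0 ≠ 0 → eval a (pderiv e F) ≠ 0 → gr F a ≠ 0 →
      ∀ e1 e2 e3, gr F a e1 = 0 → gr F a e2 = 0 → gr F a e3 = 0 → bl F a e1 e1 = 1 →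
      bl F a e2 e2 = 1 → bl F a e3 e3 = 1 → bl F a e1 e2 = 0 → bl F a e1 e3 = 0 →
      bl F a e2 e3 = 0 → False) (x : Fin (n + 1) → k) (hx : eval x F = 0) :
    ∃ W : Submodule k (Fin (n + 1) → k), Module.finrank k W = n - 1 ∧ x ∈ W ∧
        ∀ y ∈ W, eval y F = 0 := by
  have hpr : Prime F := UniqueFactorizationMonoid.irreducible_iff_prime.1 hF
  have hu : ¬ F ∣ pderiv e F * Bp F e i j * u0 := by
    intro h
    rcases hpr.dvd_or_dvd h with h | h
    · rcases hpr.dvd_or_dvd h with h | h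
      · exact he h
      · exact hB h
    · exact hu0 h
  refine closure_lem (by omega) hhom hF hu ?_ x hx
  intro a hFa hua
  simp only [map_mul] at hua
  have hua' := right_ne_zero_of_mul hua
  have hua2 := left_ne_zero_of_mul hua
  have hFe := left_ne_zero_of_mul hua2
  have hBa := right_ne_zero_of_mul hua2
  have hg : gr F a ≠ 0 := by
    intro h; apply hFe; rw [← gr_single, h]; simp
  have ha : a ≠ 0 := by
    rintro rfl
    apply hFe
    have h1 := hhom.pderiv (i := e)
    have hz0 : eval (0 : Fin (n + 1) → k) (pderiv e F) = constantCoeff (pderiv e F) := by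
      rw [← aeval_eq_eval]; simp
    rw [hz0]
    rw [constantCoeff_eq]
    by_contra hc
    have := h1 hc
    simp at this
    omega
  refine ptA hn hhom a hFa (fun ℓ hℓ hl => hcov ℓ hℓ a ha hFa hl) hg ?_
    (h3 a ha hFa hua' hFe hg)
  by_contra! hq
  apply hBa
  rw [← bl_xi]
  set y := xi F e a i
  set z := xi F e a j
  have hy : gr F a y = 0 := gr_xi F e a i
  have hz : gr F a z = 0 := gr_xi F e a j
  have h1 := hq y hy
  have h2 := hq z hz
  have h4 := hq (y + z) (by rw [map_add, hy, hz, add_zero])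
  rw [bl_add, map_add, map_add, h1, h2, bl_symm F a z y] at h4
  have : (2 : k) * bl F a y z = 0 := by linear_combination h4
  simpa using this

lemma setup {k : Type u} [Field k] [IsAlgClosed k] [CharZero k] {n d : ℕ}
    (hd : 2 ≤ d) {F : MvPolynomial (Fin (n + 1)) k} (hhom : F.IsHomogeneous d) (hF : Irreducible F) :
    ∃ e, ¬ F ∣ pderiv e F := by
  obtain ⟨e, he⟩ := exists_pderiv_ne (by omega) hhom hF.ne_zero
  refine ⟨e, not_dvd_deg hhom hF.ne_zero he ?_⟩
  have h1 := hhom.pderiv (i := e)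
  rw [h1.totalDegree he]; omega

lemma case5 {k : Type u} [Field k] [IsAlgClosed k] [CharZero k] {n d : ℕ} (hn : 5 ≤ n)
    (hd : 2 ≤ d) {F : MvPolynomial (Fin (n + 1)) k} (hhom : F.IsHomogeneous d) (hF : Irreducible F)
    (hcov : ∀ ℓ : (Fin (n+1) → k) →ₗ[k] k, ℓ ≠ 0 → ∀ x : Fin (n+1) → k, x ≠ 0 → eval x F = 0 →
      ℓ x = 0 → ∃ W : Submodule k (Fin (n+1) → k), Module.finrank k W = n-2 ∧ x ∈ W ∧
        ∀ y ∈ W, ℓ y = 0 ∧ eval y F = 0) (x : Fin (n + 1) → k) (hx : eval x F = 0) :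
    ∃ W : Submodule k (Fin (n + 1) → k), Module.finrank k W = n - 1 ∧ x ∈ W ∧
        ∀ y ∈ W, eval y F = 0 := by
  obtain ⟨e, he⟩ := setup hd hhom hF
  obtain ⟨K, i1, i2, ι, D, p, H⟩ := existFrame hF e he
  obtain ⟨i, j, hij⟩ := H.exists_B hd hhom hF.ne_zero
  refine assemble (by omega) hd hhom hF hcov e he i j hij 1 ?_ ?_ x hx
  · intro h
    exact hF.not_isUnit (isUnit_of_dvd_one h)
  · intro a ha hFa _ _ hg e1 e2 e3
    exact noTriple5 hn hhom a hFa (fun ℓ hℓ hl => hcov ℓ hℓ a ha hFa hl) hg e1 e2 e3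


lemma inv_exists {K : Type*} [Field K] (h : Fin 3 → Fin 3 → K) (hs : ∀ i j, h i j = h j i)
    (hdet : (Matrix.of h).det ≠ 0) : ∃ hi : Fin 3 → Fin 3 → K, (∀ i j, hi i j = hi j i) ∧
      ∀ i j, hi i 0 * h 0 j + hi i 1 * h 1 j + hi i 2 * h 2 j = if i = j then 1 else 0 := by
  refine ⟨fun i j => (Matrix.of h)⁻¹ i j, ?_, ?_⟩
  · intro i j
    have h1 : (Matrix.of h).transpose = Matrix.of h := by ext i j; simp [hs j i]
    have h2 := Matrix.transpose_nonsing_inv (Matrix.of h)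
    rw [h1] at h2
    exact (congrFun (congrFun h2 j) i)
  · intro i j
    have h1 := Matrix.nonsing_inv_mul (Matrix.of h) (Ne.isUnit hdet)
    have h2 := congrFun (congrFun h1 i) j
    rw [Matrix.mul_apply, Fin.sum_univ_three, Matrix.one_apply] at h2
    exact h2

lemma dl3 {K : Type*} [Field K] (A : Fin 3 → K) (j : Fin 3) :
    A 0 * (if (0 : Fin 3) = j then 1 else 0) + A 1 * (if (1 : Fin 3) = j then 1 else 0)
      + A 2 * (if (2 : Fin 3) = j then 1 else 0) = A j := by
  fin_cases j <;> simp

section contr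
variable {K : Type*} [Field K] [CharZero K] {h hi : Fin 3 → Fin 3 → K}
  (hs : ∀ i j, h i j = h j i) (his : ∀ i j, hi i j = hi j i)
  (R : ∀ i j, hi i 0 * h 0 j + hi i 1 * h 1 j + hi i 2 * h 2 j = if i = j then 1 else 0)
include hs his R

lemma ctr (A : Fin 3 → K) (j : Fin 3) :
    A 0 * (hi 0 0 * h 0 j + hi 0 1 * h 1 j + hi 0 2 * h 2 j)
    + A 1 * (hi 1 0 * h 0 j + hi 1 1 * h 1 j + hi 1 2 * h 2 j)
    + A 2 * (hi 2 0 * h 0 j + hi 2 1 * h 1 j + hi 2 2 * h 2 j) = A j := by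
  rw [R, R, R, dl3]

lemma ctr3 : hi 0 0 * h 0 0 + hi 0 1 * h 0 1 + hi 0 2 * h 0 2
    + (hi 1 0 * h 1 0 + hi 1 1 * h 1 1 + hi 1 2 * h 1 2)
    + (hi 2 0 * h 2 0 + hi 2 1 * h 2 1 + hi 2 2 * h 2 2) = 3 := by
  have h0 := R 0 0
  have h1 := R 1 1
  have h2 := R 2 2
  simp only [if_true] at h0 h1 h2
  rw [hs 0 1, hs 0 2, hs 1 0, hs 1 2, hs 2 0, hs 2 1]
  rw [hs 1 0, hs 2 0, hs 2 1] at *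
  linear_combination h0 + h1 + h2

lemma ctr5 (ψ : Fin 3 → K) (T : Fin 3 → Fin 3 → Fin 3 → K)
    (hT : ∀ i j l, T i j l = ψ i * h j l + ψ j * h i l + ψ l * h i j) (l : Fin 3) :
    hi 0 0 * T 0 0 l + hi 0 1 * T 0 1 l + hi 0 2 * T 0 2 l
    + (hi 1 0 * T 1 0 l + hi 1 1 * T 1 1 l + hi 1 2 * T 1 2 l)
    + (hi 2 0 * T 2 0 l + hi 2 1 * T 2 1 l + hi 2 2 * T 2 2 l) = 5 * ψ l := by
  simp only [hT]
  have h1 := ctr hs his R ψ l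
  have h3 := ctr3 hs his R
  rw [his 1 0, his 2 0, his 2 1] at *
  linear_combination 2 * h1 + ψ l * h3

lemma star_sym (A : Fin 3 → Fin 3 → K)
    (hA : ∀ i j k l, A l i * h j k - A k i * h j l + A l j * h i k - A k j * h i l
      + (A l k - A k l) * h i j = 0) (i j : Fin 3) : 3 * A i j =
    (A 0 0 * hi 0 0 + A 0 1 * hi 0 1 + A 0 2 * hi 0 2
    + (A 1 0 * hi 1 0 + A 1 1 * hi 1 1 + A 1 2 * hi 1 2)
    + (A 2 0 * hi 2 0 + A 2 1 * hi 2 1 + A 2 2 * hi 2 2)) * h i j := by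
  have h3 := ctr3 hs his R
  have hsym : ∀ k l, A l k = A k l := by
    intro k l
    have h1 := ctr hs his R (A l) k
    have h2 := ctr hs his R (A k) l
    have : 5 * (A l k - A k l) = 0 := by
      rw [his 1 0, his 2 0, his 2 1] at *
      linear_combination hi 0 0 * hA 0 0 k l + hi 0 1 * hA 0 1 k l + hi 0 2 * hA 0 2 k l
       + (hi 0 1 * hA 1 0 k l + hi 1 1 * hA 1 1 k l + hi 1 2 * hA 1 2 k l)
       + (hi 0 2 * hA 2 0 k l + hi 1 2 * hA 2 1 k l + hi 2 2 * hA 2 2 k l)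
       - 2 * h1 + 2 * h2 - (A l k - A k l) * h3
    have := (mul_eq_zero.1 this).resolve_left (by norm_num)
    exact sub_eq_zero.1 this
  have hA' : ∀ i j k l, A l i * h j k - A k i * h j l + A l j * h i k - A k j * h i l = 0 := by
    intro i j k l
    have := hA i j k l
    rw [hsym k l] at this
    linear_combination this
  have g : ∀ l j, A l 0 * (hi 0 0 * h j 0 + hi 0 1 * h j 1 + hi 0 2 * h j 2)
      + A l 1 * (hi 1 0 * h j 0 + hi 1 1 * h j 1 + hi 1 2 * h j 2)
      + A l 2 * (hi 2 0 * h j 0 + hi 2 1 * h j 1 + hi 2 2 * h j 2) = A l j := by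
    intro l j
    rw [hs j 0, hs j 1, hs j 2]
    exact ctr hs his R (A l) j
  have h1 := ctr hs his R (fun p => A p j) i
  have h4 := g i j
  rw [hs i j]
  rw [his 1 0, his 2 0, his 2 1] at *
  linear_combination hi 0 0 * hA' j 0 0 i + hi 0 1 * hA' j 0 1 i + hi 0 2 * hA' j 0 2 i
    + (hi 0 1 * hA' j 1 0 i + hi 1 1 * hA' j 1 1 i + hi 1 2 * hA' j 1 2 i)
    + (hi 0 2 * hA' j 2 0 i + hi 1 2 * hA' j 2 1 i + hi 2 2 * hA' j 2 2 i)
    - A i j * h3 + h1 - h4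

lemma tau_zero (τ : Fin 3 → K) (ht : ∀ i j l, τ j * h l i = τ l * h j i) (j : Fin 3) :
    τ j = 0 := by
  have h3 := ctr3 hs his R
  have h1 := ctr hs his R τ j
  have : 2 * τ j = 0 := by
    rw [his 1 0, his 2 0, his 2 1] at *
    rw [hs 0 j, hs 1 j, hs 2 j] at h1
    linear_combination hi 0 0 * ht 0 j 0 + hi 0 1 * ht 1 j 0 + hi 0 2 * ht 2 j 0
     + (hi 0 1 * ht 0 j 1 + hi 1 1 * ht 1 j 1 + hi 1 2 * ht 2 j 1)
     + (hi 0 2 * ht 0 j 2 + hi 1 2 * ht 1 j 2 + hi 2 2 * ht 2 j 2) - τ j * h3 + h1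
  simpa using this
end contr


lemma fub1 {k K : Type*} [Field k] [Field K] [CharZero K] [Algebra k K]
    (E : Fin 3 → Derivation k K K) (E0 : Derivation k K K)
    (comm : ∀ i j r, E i (E j r) = E j (E i r)) (comm0 : ∀ i r, E0 (E i r) = E i (E0 r))
    (f : K) (p : Fin 3 → K) (h : Fin 3 → Fin 3 → K)
    (hf : ∀ i, E i f = p i) (h0f : E0 f = 0) (hh : ∀ i j, E i (p j) = h i j)
    (hdet : (Matrix.of h).det ≠ 0) (φ : Fin 3 → K)
    (hφ : ∀ i j l, E l (h i j) = φ i * h j l + φ j * h i l + φ l * h i j) :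
    ∃ lam : K, (∀ i j, E i (φ j) = φ i * φ j + lam * h i j) ∧ (∀ i, E i lam = φ i * lam) ∧
      (∀ i, E0 (p i) = 0) ∧ (∀ i j, E0 (h i j) = 0) ∧ (∀ i, E0 (φ i) = 0) ∧ E0 lam = 0 := by
  have hs : ∀ i j, h i j = h j i := by
    intro i j; rw [← hh, ← hh, ← hf, ← hf, comm]
  obtain ⟨hi, his, R⟩ := inv_exists h hs hdet
  have lei : ∀ (D : Derivation k K K) (a b : K), D (a * b) = D a * b + a * D b := by
    intro D a b; rw [Derivation.leibniz, smul_eq_mul, smul_eq_mul]; ring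
  obtain ⟨lam, hlam⟩ : ∃ lam : K, ∀ i j, E i (φ j) - φ i * φ j = lam * h i j := by
    have key : ∃ t, ∀ i j, 3 * (fun i j => E i (φ j) - φ i * φ j) i j = t * h i j :=
      ⟨_, star_sym hs his R (fun i j => E i (φ j) - φ i * φ j) (by
        intro i j l m
        have h1 := comm l m (h i j)
        rw [hφ, hφ] at h1
        simp only [map_add, lei, hφ] at h1
        rw [hs m l] at h1
        linear_combination - h1)⟩
    obtain ⟨t, ht⟩ := key
    refine ⟨t / 3, fun i j => ?_⟩
    have h3 : (3 : K) ≠ 0 := by norm_num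
    field_simp
    linear_combination ht i j
  have hE : ∀ i j, E i (φ j) = φ i * φ j + lam * h i j := fun i j => by
    linear_combination hlam i j
  have hEl : ∀ i, E i lam = φ i * lam := by
    intro i
    have := tau_zero hs his R (fun j => E j lam - φ j * lam) (by
      intro i j l
      have h1 := comm j l (φ i)
      rw [hE, hE] at h1
      simp only [map_add, lei, hE, hφ] at h1
      rw [hs l j, hs i j, hs i l] at h1
      linear_combination h1) i
    exact sub_eq_zero.1 this
  have h0p : ∀ i, E0 (p i) = 0 := fun i => by rw [← hf, comm0, h0f, map_zero]
  have h0h : ∀ i j, E0 (h i j) = 0 := fun i j => by rw [← hh, comm0, h0p, map_zero]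
  have h0φ : ∀ i, E0 (φ i) = 0 := by
    intro i
    have h5 := ctr5 hs his R (fun i => E0 (φ i)) (fun _ _ _ => 0) (by
      intro i j l
      have h1 := congrArg E0 (hφ i j l)
      rw [comm0, h0h, map_zero] at h1
      simp only [map_add, lei, h0h] at h1
      linear_combination h1) i
    simpa using h5
  refine ⟨lam, hE, hEl, h0p, h0h, h0φ, ?_⟩
  by_contra hl
  apply hdet
  have : h = 0 := by
    ext i j
    have h1 := congrArg E0 (hE i j)
    rw [comm0, h0φ, map_zero] at h1
    simp only [map_add, lei, h0h, h0φ] at h1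
    have h2 : E0 lam * h i j = 0 := by linear_combination - h1
    exact (mul_eq_zero.1 h2).resolve_left hl
  rw [this]
  exact Matrix.det_zero

lemma fub2 {k K α : Type*} [Field k] [Field K] [CharZero K] [Algebra k K]
    (E : Fin 3 → Derivation k K K) (E0 : Derivation k K K)
    (cst : ∀ r : K, (∀ i, E i r = 0) → E0 r = 0 → ∃ c, algebraMap k K c = r)
    (comm : ∀ i j r, E i (E j r) = E j (E i r)) (comm0 : ∀ i r, E0 (E i r) = E i (E0 r))
    (X : Fin 3 → K) (hX : ∀ i j, E i (X j) = if i = j then 1 else 0) (h0X : ∀ i, E0 (X i) = 0)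
    (f : K) (p : Fin 3 → K) (h : Fin 3 → Fin 3 → K)
    (hf : ∀ i, E i f = p i) (h0f : E0 f = 0) (hh : ∀ i j, E i (p j) = h i j)
    (hdet : (Matrix.of h).det ≠ 0) (φ : Fin 3 → K)
    (hφ : ∀ i j l, E l (h i j) = φ i * h j l + φ j * h i l + φ l * h i j)
    (o e : α) (s : Fin 3 → α) (hoe : o ≠ e) (hos : ∀ i, o ≠ s i) (hes : ∀ i, e ≠ s i)
    (hsi : Function.Injective s) :
    ∃ (z : Fin 3 → α → K) (g Φ : α → K) (lam M : K) (c : α → α → k), M ≠ 0 ∧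
      (∀ a b, algebraMap k K (c a b) * M = (∑ i, ∑ j, h i j * z i a * z j b) + Φ a * g b + Φ b * g a
        + lam * g a * g b) ∧ (∀ a b, c a b = c b a) ∧ (∃ a b, c a b ≠ 0) ∧
      (∀ i, z i o = - X i) ∧ (∀ i, z i e = 0) ∧ (∀ i j, z i (s j) = if i = j then 1 else 0) ∧
      (g o = - f + ∑ i, p i * X i) ∧ g e = 1 ∧ (∀ i, g (s i) = - p i) := by
  classical
  obtain ⟨lam, hE, hEl, h0p, h0h, h0φ, h0l⟩ := fub1 E E0 comm comm0 f p h hf h0f hh hdet φ hφ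
  have hs : ∀ i j, h i j = h j i := by
    intro i j; rw [← hh, ← hh, ← hf, ← hf, comm]
  have lei : ∀ (D : Derivation k K K) (a b : K), D (a * b) = D a * b + a * D b := by
    intro D a b; rw [Derivation.leibniz, smul_eq_mul, smul_eq_mul]; ring
  obtain ⟨Yo, hYo⟩ : ∃ Y : α → K, ∀ a, Y a = if a = o then 1 else 0 := ⟨_, fun _ => rfl⟩
  obtain ⟨Ye, hYe⟩ : ∃ Y : α → K, ∀ a, Y a = if a = e then 1 else 0 := ⟨_, fun _ => rfl⟩
  obtain ⟨Ys, hYs⟩ : ∃ Y : Fin 3 → α → K, ∀ i a, Y i a = if a = s i then 1 else 0 :=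
    ⟨_, fun _ _ => rfl⟩
  have dite : ∀ (D : Derivation k K K) (P : Prop) [Decidable P], D (if P then (1 : K) else 0) = 0 := by
    intro D P _; split_ifs <;> simp
  have dYo : ∀ (D : Derivation k K K) a, D (Yo a) = 0 := fun D a => by rw [hYo]; exact dite D _
  have dYe : ∀ (D : Derivation k K K) a, D (Ye a) = 0 := fun D a => by rw [hYe]; exact dite D _
  have dYs : ∀ (D : Derivation k K K) i a, D (Ys i a) = 0 := fun D i a => by rw [hYs]; exact dite D _
  obtain ⟨z, hz⟩ : ∃ z : Fin 3 → α → K, ∀ i a, z i a = Ys i a - Yo a * X i := ⟨_, fun _ _ => rfl⟩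
  obtain ⟨g, hg⟩ : ∃ g : α → K, ∀ a, g a = Ye a - Yo a * f - (p 0 * z 0 a + p 1 * z 1 a + p 2 * z 2 a) :=
    ⟨_, fun _ => rfl⟩
  obtain ⟨Φ, hΦ⟩ : ∃ Φ : α → K, ∀ a, Φ a = φ 0 * z 0 a + φ 1 * z 1 a + φ 2 * z 2 a - Yo a :=
    ⟨_, fun _ => rfl⟩
  obtain ⟨Q, hQ⟩ : ∃ Q : α → α → K, ∀ a b, Q a b = (∑ i, ∑ j, h i j * z i a * z j b) + Φ a * g b
      + Φ b * g a + lam * g a * g b := ⟨_, fun _ _ => rfl⟩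
  have dz : ∀ i j a, E i (z j a) = - Yo a * (if j = i then 1 else 0) := by
    intro i j a
    rw [← ite_congr (propext (eq_comm (a := i) (b := j))) (fun _ => rfl) (fun _ => rfl)]
    simp only [hz, map_sub, lei, dYs, dYo, hX]; ring
  have dg : ∀ i a, E i (g a) = - (h i 0 * z 0 a + h i 1 * z 1 a + h i 2 * z 2 a) := by
    intro i a
    simp only [hg, map_sub, map_add, lei, dYe, dYo, hf, dz, hh]
    linear_combination Yo a * dl3 p i
  have dΦ : ∀ i a, E i (Φ a) = φ i * Φ a + lam * (h i 0 * z 0 a + h i 1 * z 1 a + h i 2 * z 2 a) := by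
    intro i a
    simp only [hΦ, map_sub, map_add, lei, dYo, dz, hE]
    linear_combination - Yo a * dl3 φ i
  have dQ : ∀ i a b, E i (Q a b) = φ i * Q a b := by
    intro i a b
    simp only [hQ, Fin.sum_univ_three, map_add, lei, dz, dg, dΦ, hEl, hφ]
    have h1 := dl3 (fun j => h 0 j * z 0 a + h 1 j * z 1 a + h 2 j * z 2 a) i
    have h2 := dl3 (fun j => h j 0 * z 0 b + h j 1 * z 1 b + h j 2 * z 2 b) i
    rw [hs i 0, hs i 1, hs i 2]
    rw [hs i 0, hs i 1, hs i 2] at h2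
    simp only [hs 1 0, hs 2 0, hs 2 1] at h1 h2 ⊢
    linear_combination - Yo b * h1 - Yo a * h2 - hΦ a * (h 0 i * z 0 b + h 1 i * z 1 b + h 2 i * z 2 b)
      - hΦ b * (h 0 i * z 0 a + h 1 i * z 1 a + h 2 i * z 2 a)
  have d0Q : ∀ a b, E0 (Q a b) = 0 := by
    intro a b
    simp [hQ, hz, hg, hΦ, lei, dYs, dYo, dYe, h0X, h0h, h0f, h0l, h0φ, h0p]
  have zo : ∀ i, z i o = - X i := by
    intro i; rw [hz, hYs, hYo, if_neg (hos i), if_pos rfl]; ring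
  have ze : ∀ i, z i e = 0 := by
    intro i; rw [hz, hYs, hYo, if_neg (hes i), if_neg hoe.symm]; ring
  have zs : ∀ i j, z i (s j) = if i = j then 1 else 0 := by
    intro i j; rw [hz, hYs, hYo, if_neg (hos j).symm, zero_mul, sub_zero]
    simp [hsi.eq_iff, eq_comm]
  have go : g o = - f + ∑ i, p i * X i := by
    rw [hg, zo, zo, zo, hYe, hYo, if_neg hoe, if_pos rfl, Fin.sum_univ_three]; ring
  have ge : g e = 1 := by
    rw [hg, ze, ze, ze, hYe, hYo, if_pos rfl, if_neg hoe.symm]; ring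
  have gs : ∀ i, g (s i) = - p i := by
    intro i
    rw [hg, zs, zs, zs, hYe, hYo, if_neg (hes i).symm, if_neg (hos i).symm, dl3]; ring
  have Φe : Φ e = 0 := by
    rw [hΦ, ze, ze, ze, hYo, if_neg hoe.symm]; ring
  have Φs : ∀ i, Φ (s i) = φ i := by
    intro i
    rw [hΦ, zs, zs, zs, hYo, if_neg (hos i).symm, dl3]; ring
  obtain ⟨a0, b0, hM⟩ : ∃ a b, Q a b ≠ 0 := by
    by_contra! hn
    apply hdet
    have hl : lam = 0 := by
      have := hn e e
      rw [hQ, Φe, ge] at this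
      simpa [ze] using this
    have hp0 : ∀ i, φ i = 0 := by
      intro i
      have := hn (s i) e
      rw [hQ, Φe, ge, hl, Φs] at this
      simpa [ze] using this
    have : h = 0 := by
      ext i j
      have := hn (s i) (s j)
      rw [hQ, hl, Φs, Φs, hp0, hp0] at this
      simpa [zs] using this
    rw [this]
    exact Matrix.det_zero
  have hc : ∀ a b, ∃ c, algebraMap k K c = Q a b / Q a0 b0 := by
    intro a b
    apply cst
    · intro i
      rw [Derivation.leibniz_div, dQ, dQ]
      simp only [smul_eq_mul]; ring
    · rw [Derivation.leibniz_div, d0Q, d0Q]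
      simp
  choose c hc using hc
  refine ⟨z, g, Φ, lam, Q a0 b0, c, hM, ?_, ?_, ⟨a0, b0, ?_⟩, ?_⟩
  · intro a b
    rw [hc, div_mul_cancel₀ _ hM, hQ]
  · intro a b
    apply (algebraMap k K).injective
    rw [hc, hc]
    congr 1
    simp only [hQ, Fin.sum_univ_three]
    rw [hs 1 0, hs 2 0, hs 2 1]
    ring
  · intro h0
    have := hc a0 b0
    rw [h0, map_zero, div_self hM] at this
    exact zero_ne_one this
  · exact ⟨zo, ze, zs, go, ge, gs⟩


/-- The polynomial `F'''(ξ_i, ξ_j, ξ_l)`. -/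
noncomputable def TP {k σ : Type*} [Field k] (F : MvPolynomial σ k) (e i j l : σ) :
    MvPolynomial σ k :=
  pderiv e F ^ 3 * pderiv i (pderiv j (pderiv l F))
  - pderiv e F ^ 2 * (pderiv i F * pderiv e (pderiv j (pderiv l F))
    + pderiv j F * pderiv i (pderiv e (pderiv l F)) + pderiv l F * pderiv i (pderiv j (pderiv e F)))
  + pderiv e F * (pderiv i F * pderiv j F * pderiv e (pderiv e (pderiv l F))
    + pderiv i F * pderiv l F * pderiv e (pderiv j (pderiv e F))
    + pderiv j F * pderiv l F * pderiv i (pderiv e (pderiv e F)))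
  - pderiv i F * pderiv j F * pderiv l F * pderiv e (pderiv e (pderiv e F))

namespace Frame
variable {k σ K : Type*} [Field k] [Field K] [Algebra k K] [Fintype σ] [DecidableEq σ]
    {F : MvPolynomial σ k} {ι : MvPolynomial σ k →ₐ[k] K} {e : σ} {D : σ → Derivation k K K}
    {p : σ → K} (H : Frame F ι e D p)
include H

lemma Dp_symm (i j : σ) : D i (p j) = D j (p i) := by
  have h1 := H.Dp i j
  have h2 := H.Dp j i
  have : Bp F e i j = Bp F e j i := by
    simp only [Bp, pderiv_comm' i j]; ring
  rw [this, ← h2] at h1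
  exact mul_right_cancel₀ (pow_ne_zero 3 H.hFe) h1

lemma DDp (i j l : σ) : (D l (D i (p j)) * ι (pderiv e F) + D i (p j) * D l (ι (pderiv e F))
    + D l (p i) * D j (ι (pderiv e F)) + D l (p j) * D i (ι (pderiv e F))) * ι (pderiv e F) ^ 3
    = - ι (TP F e i j l) := by
  have lei : ∀ (D : Derivation k K K) (a b : K), D (a * b) = D a * b + a * D b := by
    intro D a b; rw [Derivation.leibniz, smul_eq_mul, smul_eq_mul]; ring
  have h1 := congrArg (D l) (congrArg (D i) (H.hp j))
  simp only [lei, map_neg, H.Dpoly, map_add] at h1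
  have hi := H.hp i
  have hj := H.hp j
  have hl := H.hp l
  simp only [TP, map_add, map_sub, map_mul, map_pow, H.Dpoly]
  have e1 : ι (pderiv i F) = - (p i * ι (pderiv e F)) := by rw [hi]; ring
  have e2 : ι (pderiv j F) = - (p j * ι (pderiv e F)) := by rw [hj]; ring
  have e3 : ι (pderiv l F) = - (p l * ι (pderiv e F)) := by rw [hl]; ring
  have c1 : pderiv i (pderiv j (pderiv l F)) = pderiv l (pderiv i (pderiv j F)) := by
    rw [pderiv_comm' j l, pderiv_comm' i l]
  have c2 : pderiv e (pderiv j (pderiv l F)) = pderiv l (pderiv e (pderiv j F)) := by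
    rw [pderiv_comm' j l, pderiv_comm' e l]
  have c3 : pderiv i (pderiv e (pderiv l F)) = pderiv l (pderiv i (pderiv e F)) := by
    rw [pderiv_comm' e l, pderiv_comm' i l]
  have c4 : pderiv i (pderiv j (pderiv e F)) = pderiv e (pderiv i (pderiv j F)) := by
    rw [pderiv_comm' j e, pderiv_comm' i e]
  have c5 : pderiv e (pderiv e (pderiv l F)) = pderiv l (pderiv e (pderiv e F)) := by
    rw [pderiv_comm' e l, pderiv_comm' e l]
  have c6 : pderiv e (pderiv j (pderiv e F)) = pderiv e (pderiv e (pderiv j F)) := by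
    rw [pderiv_comm' j e]
  have c7 : pderiv i (pderiv e (pderiv e F)) = pderiv e (pderiv i (pderiv e F)) := by
    rw [pderiv_comm' i e]
  have c8 : pderiv j (pderiv e F) = pderiv e (pderiv j F) := pderiv_comm' _ _ _
  rw [c1, c2, c3, c4, c5, c6, c7, c8, e1, e2, e3]
  linear_combination (ι (pderiv e F)) ^ 3 * h1
end Frame


lemma Kpart {k σ K : Type*} [Field k] [CharZero k] [Field K] [Algebra k K] [Fintype σ] [DecidableEq σ]
    {F : MvPolynomial σ k} {ι : MvPolynomial σ k →ₐ[k] K} {e : σ} {D : σ → Derivation k K K}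
    {p : σ → K} (H : Frame F ι e D p) {d : ℕ} (hd : 3 ≤ d) (hhom : F.IsHomogeneous d)
    (hF : F ≠ 0) (o : σ) (s : Fin 3 → σ) (hoe : o ≠ e) (hos : ∀ i, o ≠ s i) (hes : ∀ i, e ≠ s i)
    (hsi : Function.Injective s)
    (hsum : ∀ f : σ → K, ∑ i, f i = f e + f o + ∑ t, f (s t))
    (hxo : ι (X o) ≠ 0)
    (hdetP : (Matrix.of fun i j => ι (Bp F e (s i) (s j))).det ≠ 0)
    (θ : Fin 3 → K) (hθ : ∀ i j l, ι (TP F e (s i) (s j) (s l)) = θ i * ι (Bp F e (s j) (s l))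
      + θ j * ι (Bp F e (s i) (s l)) + θ l * ι (Bp F e (s i) (s j))) : False := by
  have : CharZero K := charZero_of_injective_algebraMap (algebraMap k K).injective
  have lei : ∀ (D : Derivation k K K) (a b : K), D (a * b) = D a * b + a * D b := by
    intro D a b; rw [Derivation.leibniz, smul_eq_mul, smul_eq_mul]; ring
  have hG := H.hFe
  have Dxo : ∀ i, D (s i) (ι (X o)) = 0 := by
    intro i; rw [H.hD, if_neg (hos i).symm, if_neg hoe.symm]; ring
  have De : ∀ r, D e r = 0 := by
    intro r
    have : D e = 0 := by
      apply H.ext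
      intro j
      rw [H.hD, H.pe]; split_ifs <;> ring
    rw [this]; rfl
  have eul0 : ∑ i, ι (X i) * p i = 0 := by
    have h1 := congrArg ι hhom.sum_X_mul_pderiv
    rw [map_sum, map_nsmul, (H.hker F).2 dvd_rfl, smul_zero] at h1
    have h2 : (∑ i, ι (X i) * p i) * ι (pderiv e F) = 0 := by
      rw [Finset.sum_mul, ← neg_eq_zero, ← h1, ← Finset.sum_neg_distrib]
      refine Finset.sum_congr rfl fun i _ => ?_
      rw [map_mul]
      linear_combination - ι (X i) * H.hp i
    exact (mul_eq_zero.1 h2).resolve_right hG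
  obtain ⟨E, hE⟩ : ∃ E : Fin 3 → Derivation k K K, ∀ i r, E i r = ι (X o) * D (s i) r :=
    ⟨fun i => ι (X o) • D (s i), fun i r => by simp⟩
  obtain ⟨E0, hE0⟩ : ∃ E0 : Derivation k K K, ∀ r, E0 r = ∑ i, ι (X i) * D i r :=
    ⟨∑ i, ι (X i) • D i, fun r => by rw [der_sum_apply]; simp⟩
  have E0x : ∀ j, E0 (ι (X j)) = ι (X j) := by
    intro j
    rw [hE0]
    simp only [H.hD, mul_add, Finset.sum_add_distrib, mul_ite, mul_one, mul_zero,
      Finset.sum_ite_eq', Finset.mem_univ, if_true]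
    split_ifs
    · rw [eul0, add_zero]
    · simp
  have E0q : ∀ (m : ℕ) (q : MvPolynomial σ k), q.IsHomogeneous m → E0 (ι q) = m * ι q := by
    intro m q hq
    rw [der_poly]
    have h1 := congrArg ι hq.sum_X_mul_pderiv
    rw [map_sum, map_nsmul, nsmul_eq_mul] at h1
    rw [← h1]
    refine Finset.sum_congr rfl fun i _ => ?_
    rw [E0x, map_mul, mul_comm]
  have E0p : ∀ i, E0 (p i) = 0 := by
    intro i
    have h1 := congrArg E0 (H.hp i)
    rw [lei, map_neg, E0q (d - 1) _ hhom.pderiv, E0q (d - 1) _ hhom.pderiv] at h1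
    have h2 : E0 (p i) * ι (pderiv e F) = 0 := by
      linear_combination h1 - ((d - 1 : ℕ) : K) * H.hp i
    exact (mul_eq_zero.1 h2).resolve_right hG
  have comm : ∀ i j r, E i (E j r) = E j (E i r) := by
    intro i j r
    simp only [hE, lei, Dxo, H.comm (s i) (s j)]; ring
  have dite : ∀ (D : Derivation k K K) (P : Prop) [Decidable P], D (if P then (1 : K) else 0) = 0 := by
    intro D P _; split_ifs <;> simp
  have comm0 : ∀ i r, E0 (E i r) = E i (E0 r) := by
    intro i r
    have : ⁅E0, E i⁆ = 0 := by
      apply H.ext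
      intro j
      rw [Derivation.commutator_apply, E0x, hE, H.hD, lei, map_add, E0x, dite]
      split_ifs <;> simp [E0p]
    have h2 := congrArg (fun E => E r) this
    simp only [Derivation.commutator_apply, Derivation.zero_apply] at h2
    exact sub_eq_zero.1 h2
  have cst : ∀ r : K, (∀ i, E i r = 0) → E0 r = 0 → ∃ c, algebraMap k K c = r := by
    intro r h1 h2
    have h3 : ∀ i, D (s i) r = 0 := by
      intro i
      have := h1 i
      rw [hE] at this
      exact (mul_eq_zero.1 this).resolve_left hxo
    have h4 : D o r = 0 := by
      rw [hE0, hsum] at h2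
      simp only [De, h3, mul_zero, zero_add, Finset.sum_const_zero, add_zero] at h2
      exact (mul_eq_zero.1 h2).resolve_left hxo
    apply H.cst
    intro D'
    rw [H.decomp D' r, hsum]
    simp [De, h3, h4]
  have hX : ∀ i j, E i (ι (X (s j)) / ι (X o)) = if i = j then 1 else 0 := by
    intro i j
    rw [hE, Derivation.leibniz_div, Dxo, H.hD, if_neg (hes j)]
    simp only [smul_eq_mul, hsi.eq_iff]
    field_simp
    split_ifs <;> ring
  have h0X : ∀ i, E0 (ι (X (s i)) / ι (X o)) = 0 := by
    intro i
    rw [Derivation.leibniz_div, E0x, E0x]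
    simp only [smul_eq_mul]; ring
  have hf : ∀ i, E i (ι (X e) / ι (X o)) = p (s i) := by
    intro i
    rw [hE, Derivation.leibniz_div, Dxo, H.hD, if_neg (hes i).symm, if_pos rfl]
    simp only [smul_eq_mul]
    field_simp
    ring
  have h0f : E0 (ι (X e) / ι (X o)) = 0 := by
    rw [Derivation.leibniz_div, E0x, E0x]
    simp only [smul_eq_mul]; ring
  have hB : ∀ i j, ι (Bp F e i j) = - D i (p j) * ι (pderiv e F) ^ 3 := fun i j => by
    linear_combination H.Dp i j
  have hdet : (Matrix.of fun i j => ι (X o) * D (s i) (p (s j))).det ≠ 0 := by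
    have h1 : (Matrix.of fun i j => ι (Bp F e (s i) (s j))) =
        (- ι (pderiv e F) ^ 3 / ι (X o)) • (Matrix.of fun i j => ι (X o) * D (s i) (p (s j))) := by
      ext i j
      simp only [Matrix.of_apply, Matrix.smul_apply, smul_eq_mul, hB]
      field_simp
    rw [h1, Matrix.det_smul] at hdetP
    exact right_ne_zero_of_mul hdetP
  obtain ⟨φ, hφ⟩ : ∃ φ : Fin 3 → K, ∀ i, φ i * ι (pderiv e F) = ι (X o) * (θ i - D (s i) (ι (pderiv e F))) :=
    ⟨fun i => ι (X o) * (θ i - D (s i) (ι (pderiv e F))) / ι (pderiv e F), fun i => by field_simp⟩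
  obtain ⟨z, g, Φ, lam, M, c, hM, hc, hcs, ⟨a0, b0, hne⟩, zo, ze, zs, go, ge, gs⟩ :=
    fub2 E E0 cst comm comm0 _ hX h0X _ (fun i => p (s i)) (fun i j => ι (X o) * D (s i) (p (s j)))
      hf h0f (fun i j => hE _ _) hdet φ (by
        intro i j l
        have h1 := H.DDp (s i) (s j) (s l)
        have h2 := hθ i j l
        rw [hB, hB, hB] at h2
        simp only [hE, lei, Dxo]
        rw [H.Dp_symm (s l) (s i), H.Dp_symm (s l) (s j)] at h1
        have h4 : ι (pderiv e F) ^ 4 ≠ 0 := pow_ne_zero 4 hG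
        apply mul_right_cancel₀ h4
        linear_combination ι (X o) ^ 2 * (h1 - h2) - ι (X o) * ι (pderiv e F) ^ 3 *
          (D (s j) (p (s l)) * hφ i + D (s i) (p (s l)) * hφ j + D (s i) (p (s j)) * hφ l))
      o e s hoe hos hes hsi
  have sz : ∀ i, ∑ a, ι (X a) * z i a = 0 := by
    intro i
    rw [hsum, zo, ze]
    simp only [zs, mul_ite, mul_one, mul_zero, Finset.sum_ite_eq, Finset.mem_univ, if_true]
    field_simp
    ring
  have sg : ∑ a, ι (X a) * g a = 0 := by
    rw [hsum, go, ge, Fin.sum_univ_three, Fin.sum_univ_three, gs, gs, gs]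
    field_simp
    ring
  have hQ : F ∣ ∑ a, ∑ b, C (c a b) * X a * X b := by
    rw [← H.hker]
    have hC : ∀ c, ι (C c) = algebraMap k K c := fun c => ι.commutes c
    have h1 : ∀ a, ∑ b, ι (X b) * (algebraMap k K (c a b) * M) = (∑ b, ι (X b) * Φ b) * g a := by
      intro a
      have : ∀ b, ι (X b) * (algebraMap k K (c a b) * M) =
          (∑ i, ∑ j, ι (X o) * D (s i) (p (s j)) * z i a * (ι (X b) * z j b))
          + Φ a * (ι (X b) * g b) + (ι (X b) * Φ b) * g a + lam * g a * (ι (X b) * g b) := by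
        intro b
        rw [hc]
        simp only [Fin.sum_univ_three]
        ring
      simp only [this, Finset.sum_add_distrib, ← Finset.mul_sum, sg, ← Finset.sum_mul]
      rw [Finset.sum_comm]
      have : ∀ i, ∑ b, ∑ j, ι (X o) * D (s i) (p (s j)) * z i a * (ι (X b) * z j b) = 0 := by
        intro i
        rw [Finset.sum_comm]
        simp only [← Finset.mul_sum, sz, mul_zero, Finset.sum_const_zero]
      simp only [this]; simp
    have h2 : (ι (∑ a, ∑ b, C (c a b) * X a * X b)) * M = 0 := by
      have : ι (∑ a, ∑ b, C (c a b) * X a * X b) * M =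
          ∑ a, ι (X a) * ∑ b, ι (X b) * (algebraMap k K (c a b) * M) := by
        simp only [map_sum, map_mul, hC, Finset.sum_mul, Finset.mul_sum]
        refine Finset.sum_congr rfl fun a _ => Finset.sum_congr rfl fun b _ => ?_
        ring
      rw [this]
      simp only [h1]
      have : ∀ a, ι (X a) * ((∑ b, ι (X b) * Φ b) * g a) = (∑ b, ι (X b) * Φ b) * (ι (X a) * g a) :=
        fun a => by ring
      simp only [this]
      rw [← Finset.mul_sum, sg, mul_zero]
    exact (mul_eq_zero.1 h2).resolve_right hM
  refine not_dvd_deg hhom hF ?_ ?_ hQ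
  · intro h0
    have h1 := congrArg (fun q => pderiv a0 (pderiv b0 q)) h0
    simp [pderiv_X, Pi.single_apply, Finset.sum_add_distrib] at h1
    rw [hcs b0 a0, ← C_add, ← two_mul, C_eq_zero] at h1
    simp at h1
    exact hne h1
  · refine lt_of_le_of_lt (b := 2) ?_ (by omega)
    refine totalDegree_finsetSum_le fun i _ => totalDegree_finsetSum_le fun j _ => ?_
    refine (totalDegree_mul _ _).trans ?_
    have := totalDegree_mul (C (c i j)) (X i)
    simp at this ⊢
    omega


/-- bilinear form -/
noncomputable def bet {k : Type*} [Field k] (B : Fin 3 → Fin 3 → k) :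
    (Fin 3 → k) →ₗ[k] (Fin 3 → k) →ₗ[k] k :=
  ∑ i, ∑ j, B i j • (LinearMap.proj (R := k) (φ := fun _ : Fin 3 => k) i).smulRight (LinearMap.proj (R := k) (φ := fun _ : Fin 3 => k) j)

lemma bet_apply {k : Type*} [Field k] (B : Fin 3 → Fin 3 → k) (x y : Fin 3 → k) :
    bet B x y = ∑ i, ∑ j, B i j * (x i * y j) := by
  simp [bet, LinearMap.sum_apply]

/-- trilinear form -/
noncomputable def tri {k : Type*} [Field k] (T : Fin 3 → Fin 3 → Fin 3 → k) :
    (Fin 3 → k) →ₗ[k] (Fin 3 → k) →ₗ[k] (Fin 3 → k) →ₗ[k] k :=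
  ∑ i, ∑ j, ∑ l, T i j l • (LinearMap.proj (R := k) (φ := fun _ : Fin 3 => k) i).smulRight
    ((LinearMap.proj (R := k) (φ := fun _ : Fin 3 => k) j).smulRight (LinearMap.proj (R := k) (φ := fun _ : Fin 3 => k) l))

lemma tri_apply {k : Type*} [Field k] (T : Fin 3 → Fin 3 → Fin 3 → k) (x y z : Fin 3 → k) :
    tri T x y z = ∑ i, ∑ j, ∑ l, T i j l * (x i * (y j * z l)) := by
  simp [tri, LinearMap.sum_apply]

lemma bet_nondeg {k : Type*} [Field k] (B : Fin 3 → Fin 3 → k) 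
    (hdet : (Matrix.of B).det ≠ 0) (x : Fin 3 → k) (h : ∀ z, bet B x z = 0) : x = 0 := by
  by_contra hx
  apply hdet
  rw [← Matrix.exists_vecMul_eq_zero_iff]
  refine ⟨x, hx, ?_⟩
  ext j
  have := h (Pi.single j 1)
  rw [bet_apply] at this
  simp only [Pi.single_apply, mul_ite, mul_one, mul_zero, Finset.sum_ite_eq', Finset.mem_univ,
    if_true] at this
  rw [Matrix.vecMul, dotProduct, Pi.zero_apply, ← this]
  exact Finset.sum_congr rfl fun i _ => by simp [mul_comm]

lemma orth3 {k : Type*} [Field k] [IsAlgClosed k] [CharZero k] (B : Fin 3 → Fin 3 → k)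
    (hs : ∀ i j, B i j = B j i) (hdet : (Matrix.of B).det ≠ 0) :
    ∃ b : Module.Basis (Fin 3) k (Fin 3 → k), ∀ i j, bet B (b i) (b j) = if i = j then 1 else 0 := by
  have : Invertible (2 : k) := invertibleOfNonzero two_ne_zero
  have hsym : ∀ x y, bet B x y = bet B y x := by
    intro x y
    rw [bet_apply, bet_apply, Finset.sum_comm]
    exact Finset.sum_congr rfl fun i _ => Finset.sum_congr rfl fun j _ => by rw [hs]; ring
  obtain ⟨v, hv⟩ := LinearMap.BilinForm.exists_orthogonal_basis (B := bet B) ⟨fun x y => hsym x y⟩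
  have h3 : Module.finrank k (Fin 3 → k) = 3 := by simp
  let w := v.reindex (finCongr h3)
  have hw : ∀ i j, i ≠ j → bet B (w i) (w j) = 0 := by
    intro i j hij
    simp only [w, Module.Basis.reindex_apply]
    exact hv (fun h => hij (by simpa using h))
  have hw0 : ∀ i, bet B (w i) (w i) ≠ 0 := by
    intro i h0
    apply w.ne_zero i
    apply bet_nondeg B hdet
    have : bet B (w i) = 0 := by
      apply w.ext
      intro j
      by_cases hij : i = j
      · subst hij; simpa using h0
      · simpa using hw i j hij
    intro z; rw [this]; rfl
  have : ∀ i, ∃ c : k, c * c = bet B (w i) (w i) := fun i => by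
    obtain ⟨c, hc⟩ := IsAlgClosed.exists_eq_mul_self (bet B (w i) (w i))
    exact ⟨c, hc.symm⟩
  choose c hc using this
  have hc0 : ∀ i, c i ≠ 0 := fun i h => hw0 i (by rw [← hc, h, mul_zero])
  refine ⟨w.unitsSMul (fun i => (Units.mk0 (c i) (hc0 i))⁻¹), ?_⟩
  intro i j
  simp only [Module.Basis.unitsSMul_apply, Units.smul_def, map_smul, LinearMap.smul_apply, smul_eq_mul]
  split_ifs with h
  · subst h
    rw [← hc]
    have := hc0 i
    simp
    field_simp
  · rw [hw i j h]; simp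

lemma conic {k : Type*} [Field k] [IsAlgClosed k] [CharZero k] (B : Fin 3 → Fin 3 → k)
    (hs : ∀ i j, B i j = B j i) (hdet : (Matrix.of B).det ≠ 0)
    (T : Fin 3 → Fin 3 → Fin 3 → k) (hT1 : ∀ i j l, T i j l = T j i l)
    (hT2 : ∀ i j l, T i j l = T i l j) (hv : ∀ v, bet B v v = 0 → tri T v v v = 0) :
    ∃ θ : Fin 3 → k, ∀ i j l, T i j l = θ i * B j l + θ j * B i l + θ l * B i j := by
  obtain ⟨b, hb⟩ := orth3 B hs hdet
  obtain ⟨I, hI⟩ := IsAlgClosed.exists_eq_mul_self (-1 : k)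
  have hI0 : I ≠ 0 := by rintro rfl; simp at hI
  have s1 : ∀ x y z, tri T x y z = tri T y x z := by
    intro x y z
    rw [tri_apply, tri_apply, Finset.sum_comm]
    exact Finset.sum_congr rfl fun i _ => Finset.sum_congr rfl fun j _ =>
      Finset.sum_congr rfl fun l _ => by rw [hT1]; ring
  have s2 : ∀ x y z, tri T x y z = tri T x z y := by
    intro x y z
    rw [tri_apply, tri_apply]
    refine Finset.sum_congr rfl fun i _ => ?_
    rw [Finset.sum_comm]
    exact Finset.sum_congr rfl fun j _ => Finset.sum_congr rfl fun l _ => by rw [hT2]; ring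
  obtain ⟨t, ht⟩ : ∃ t : Fin 3 → Fin 3 → Fin 3 → k, ∀ i j l, tri T (b i) (b j) (b l) = t i j l :=
    ⟨_, fun _ _ _ => rfl⟩
  have t1 : ∀ i j l, t i j l = t j i l := fun i j l => by rw [← ht, ← ht, s1]
  have t2 : ∀ i j l, t i j l = t i l j := fun i j l => by rw [← ht, ← ht, s2]
  have key : ∀ x y z : k, x * x + y * y + z * z = 0 →
      t 0 0 0 * x ^ 3 + t 1 1 1 * y ^ 3 + t 2 2 2 * z ^ 3 + 3 * t 0 0 1 * x ^ 2 * y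
      + 3 * t 0 0 2 * x ^ 2 * z + 3 * t 0 1 1 * x * y ^ 2 + 3 * t 0 2 2 * x * z ^ 2
      + 3 * t 1 1 2 * y ^ 2 * z + 3 * t 1 2 2 * y * z ^ 2 + 6 * t 0 1 2 * x * y * z = 0 := by
    intro x y z h
    have h1 := hv (x • b 0 + y • b 1 + z • b 2) (by
      simp only [map_add, map_smul, LinearMap.add_apply, LinearMap.smul_apply, hb, smul_eq_mul]
      simp
      linear_combination h)
    simp only [map_add, map_smul, LinearMap.add_apply, LinearMap.smul_apply, ht, smul_eq_mul] at h1
    rw [t1 1 0 0, t2 0 1 0, t1 1 0 1, t2 1 1 0, t1 1 0 1, t1 2 0 0, t2 0 2 0, t1 2 0 2, t2 2 2 0, t1 2 0 2,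
      t1 2 1 1, t2 1 2 1, t1 2 1 2, t2 2 2 1, t1 2 1 2, t1 1 0 2, t2 0 2 1, t1 2 0 1, t2 0 2 1,
      t2 1 2 0, t1 1 0 2, t1 2 1 0, t2 1 2 0, t1 1 0 2] at h1
    linear_combination h1
  have cancel : ∀ u v w : k, u + I * v = w → u - I * v = w → u = w ∧ v = 0 := by
    intro u v w h1 h2
    have h3 : 2 * I * v = 0 := by linear_combination h1 - h2
    have h4 : v = 0 := by
      rcases mul_eq_zero.1 h3 with h | h
      · exact absurd h (mul_ne_zero two_ne_zero hI0)
      · exact h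
    exact ⟨by rw [← h1, h4]; ring, h4⟩
  have a1 := cancel (t 0 0 0 - 3 * t 0 1 1) (3 * t 0 0 1 - t 1 1 1) 0
    (by linear_combination key 1 I 0 (by linear_combination - hI) + (3 * t 0 1 1 + I * t 1 1 1) * hI)
    (by linear_combination key 1 (-I) 0 (by linear_combination - hI) + (3 * t 0 1 1 - I * t 1 1 1) * hI)
  have a2 := cancel (t 0 0 0 - 3 * t 0 2 2) (3 * t 0 0 2 - t 2 2 2) 0
    (by linear_combination key 1 0 I (by linear_combination - hI) + (3 * t 0 2 2 + I * t 2 2 2) * hI)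
    (by linear_combination key 1 0 (-I) (by linear_combination - hI) + (3 * t 0 2 2 - I * t 2 2 2) * hI)
  have a3 := cancel (t 1 1 1 - 3 * t 1 2 2) (3 * t 1 1 2 - t 2 2 2) 0
    (by linear_combination key 0 1 I (by linear_combination - hI) + (3 * t 1 2 2 + I * t 2 2 2) * hI)
    (by linear_combination key 0 1 (-I) (by linear_combination - hI) + (3 * t 1 2 2 - I * t 2 2 2) * hI)
  obtain ⟨a1, a4⟩ := a1
  obtain ⟨a2, a5⟩ := a2
  obtain ⟨a3, a6⟩ := a3
  have h3 : (3 : k) ≠ 0 := by norm_num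
  have b1 : t 0 2 2 = t 0 1 1 := mul_left_cancel₀ h3 (by linear_combination a1 - a2)
  have b2 : t 0 0 1 = t 1 2 2 := mul_left_cancel₀ h3 (by linear_combination a4 + a3)
  have b3 : t 0 0 2 = t 1 1 2 := mul_left_cancel₀ h3 (by linear_combination a5 - a6)
  have c0 : t 0 0 0 = 3 * t 0 1 1 := by linear_combination a1
  have c1 : t 1 1 1 = 3 * t 1 2 2 := by linear_combination a3
  have c2 : t 2 2 2 = 3 * t 1 1 2 := by linear_combination - a6
  have b0 : t 0 1 2 = 0 := by
    have h1 := key 3 4 (5 * I) (by linear_combination - 25 * hI)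
    rw [c0, c1, c2, b1, b2, b3] at h1
    have h2 : (360 * I) * t 0 1 2 = 0 := by
      linear_combination h1 + (225 * t 0 1 1 + 300 * t 1 2 2 + 375 * I * t 1 1 2) * hI
    exact (mul_eq_zero.1 h2).resolve_left (mul_ne_zero (by norm_num) hI0)
  obtain ⟨r, hr⟩ : ∃ r : Fin 3 → k, r 0 = t 0 1 1 ∧ r 1 = t 1 2 2 ∧ r 2 = t 1 1 2 :=
    ⟨![t 0 1 1, t 1 2 2, t 1 1 2], by simp⟩
  obtain ⟨r0, r1, r2⟩ := hr
  have tt : ∀ i j l, t i j l = r i * (if j = l then 1 else 0) + r j * (if i = l then 1 else 0)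
      + r l * (if i = j then 1 else 0) := by
    have g : ∀ i j l, t i j l = t j l i := fun i j l => by rw [t1 i j l, t2 j i l]
    intro i j l
    fin_cases i <;> fin_cases j <;> fin_cases l <;> simp [r0, r1, r2] <;> grind
  let θ : (Fin 3 → k) →ₗ[k] k := b.constr k r
  have hθ : ∀ i, θ (b i) = r i := fun i => b.constr_basis k r i
  have hN : tri T = θ.smulRight (bet B) + (θ.smulRight (bet B)).flip
      + (bet B).compr₂ (LinearMap.toSpanSingleton k _ θ) := by
    refine b.ext fun i => b.ext fun j => b.ext fun l => ?_
    simp only [ht, LinearMap.add_apply, LinearMap.smulRight_apply, LinearMap.flip_apply,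
      LinearMap.compr₂_apply, LinearMap.toSpanSingleton_apply, LinearMap.smul_apply, hb, hθ,
      smul_eq_mul, tt]
    ring
  refine ⟨fun i => θ (Pi.single i 1), fun i j l => ?_⟩
  have h1 : tri T (Pi.single i 1) (Pi.single j 1) (Pi.single l 1) = T i j l := by
    rw [tri_apply]; simp [Pi.single_apply]
  have h2 : ∀ i j, bet B (Pi.single i 1) (Pi.single j 1) = B i j := by
    intro i j
    rw [bet_apply]; simp [Pi.single_apply]
  rw [← h1, hN]
  simp only [LinearMap.add_apply, LinearMap.smulRight_apply, LinearMap.flip_apply,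
      LinearMap.compr₂_apply, LinearMap.toSpanSingleton_apply, LinearMap.smul_apply, h2,
      smul_eq_mul]
  ring


section tl
variable {k σ : Type*} [Field k] [Fintype σ] [DecidableEq σ] (F : MvPolynomial σ k)

lemma tl_lin1 (a z w : σ → k) : IsLinearMap k (fun y => tl F a y z w) := by
  constructor
  · intro x y
    simp only [tl, Pi.add_apply, mul_add, add_mul, Finset.sum_add_distrib]
  · intro c x
    simp only [tl, Pi.smul_apply, smul_eq_mul, Finset.mul_sum]
    refine Finset.sum_congr rfl fun i _ => Finset.sum_congr rfl fun j _ =>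
      Finset.sum_congr rfl fun l _ => by ring

lemma tl_lin2 (a y w : σ → k) : IsLinearMap k (fun z => tl F a y z w) := by
  constructor
  · intro x y
    simp only [tl, Pi.add_apply, mul_add, add_mul, Finset.sum_add_distrib]
  · intro c x
    simp only [tl, Pi.smul_apply, smul_eq_mul, Finset.mul_sum]
    refine Finset.sum_congr rfl fun i _ => Finset.sum_congr rfl fun j _ =>
      Finset.sum_congr rfl fun l _ => by ring

lemma tl_lin3 (a y z : σ → k) : IsLinearMap k (fun w => tl F a y z w) := by
  constructor
  · intro x y
    simp only [tl, Pi.add_apply, mul_add, add_mul, Finset.sum_add_distrib]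
  · intro c x
    simp only [tl, Pi.smul_apply, smul_eq_mul, Finset.mul_sum]
    refine Finset.sum_congr rfl fun i _ => Finset.sum_congr rfl fun j _ =>
      Finset.sum_congr rfl fun l _ => by ring

lemma tl_single (a : σ → k) (i j l : σ) : tl F a (Pi.single i 1) (Pi.single j 1) (Pi.single l 1)
    = eval a (pderiv i (pderiv j (pderiv l F))) := by
  simp [tl, Pi.single_apply]

lemma tl_xi (e : σ) (a : σ → k) (i j l : σ) :
    tl F a (xi F e a i) (xi F e a j) (xi F e a l) = eval a (TP F e i j l) := by
  have h1 : ∀ c c' y y' z w, tl F a (c • y - c' • y') z w = c * tl F a y z w - c' * tl F a y' z w := by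
    intro c c' y y' z w
    have := tl_lin1 F a z w
    exact ((this.mk' _).map_sub (c • y) (c' • y')).trans
      (congrArg₂ _ ((this.mk' _).map_smul c y) ((this.mk' _).map_smul c' y'))
  have h2 : ∀ c c' y y' z w, tl F a z (c • y - c' • y') w = c * tl F a z y w - c' * tl F a z y' w := by
    intro c c' y y' z w
    have := tl_lin2 F a z w
    exact ((this.mk' _).map_sub (c • y) (c' • y')).trans
      (congrArg₂ _ ((this.mk' _).map_smul c y) ((this.mk' _).map_smul c' y'))
  have h3 : ∀ c c' y y' z w, tl F a z w (c • y - c' • y') = c * tl F a z w y - c' * tl F a z w y' := by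
    intro c c' y y' z w
    have := tl_lin3 F a z w
    exact ((this.mk' _).map_sub (c • y) (c' • y')).trans
      (congrArg₂ _ ((this.mk' _).map_smul c y) ((this.mk' _).map_smul c' y'))
  simp only [xi, h1, h2, h3, tl_single, TP, map_sub, map_add, map_mul, map_pow]
  ring

lemma tl_comb (a : σ → k) (u : Fin 3 → σ → k) (v : Fin 3 → k) :
    tl F a (∑ t, v t • u t) (∑ t, v t • u t) (∑ t, v t • u t) =
      tri (fun i j l => tl F a (u i) (u j) (u l)) v v v := by
  have h1 : ∀ z w, tl F a (∑ t, v t • u t) z w = ∑ t, v t * tl F a (u t) z w := by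
    intro z w
    have := tl_lin1 F a z w
    refine (map_sum (this.mk' _) _ _).trans (Finset.sum_congr rfl fun t _ => ?_)
    exact (this.mk' _).map_smul (v t) (u t)
  have h2 : ∀ z w, tl F a z (∑ t, v t • u t) w = ∑ t, v t * tl F a z (u t) w := by
    intro z w
    have := tl_lin2 F a z w
    refine (map_sum (this.mk' _) _ _).trans (Finset.sum_congr rfl fun t _ => ?_)
    exact (this.mk' _).map_smul (v t) (u t)
  have h3 : ∀ z w, tl F a z w (∑ t, v t • u t) = ∑ t, v t * tl F a z w (u t) := by
    intro z w
    have := tl_lin3 F a z w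
    refine (map_sum (this.mk' _) _ _).trans (Finset.sum_congr rfl fun t _ => ?_)
    exact (this.mk' _).map_smul (v t) (u t)
  rw [tri_apply]
  simp only [h1, h2, h3, Finset.mul_sum]
  refine Finset.sum_congr rfl fun i _ => Finset.sum_congr rfl fun j _ =>
      Finset.sum_congr rfl fun l _ => by ring

lemma bl_comb (a : σ → k) (u : Fin 3 → σ → k) (v w : Fin 3 → k) :
    bl F a (∑ t, v t • u t) (∑ t, w t • u t) = bet (fun i j => bl F a (u i) (u j)) v w := by
  rw [bet_apply]
  simp only [Fin.sum_univ_three, bl_add, bl_smul, map_add, map_smul, smul_eq_mul]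
  ring

lemma Bp_symm (e i j : σ) : Bp F e i j = Bp F e j i := by
  simp only [Bp, pderiv_comm' i j]; ring

lemma TP_symm1 (e i j l : σ) : TP F e i j l = TP F e j i l := by
  simp only [TP]
  rw [pderiv_comm' i j (pderiv l F), pderiv_comm' i j (pderiv e F), pderiv_comm' e j (pderiv l F),
    pderiv_comm' e j (pderiv e F), pderiv_comm' i e (pderiv l F), pderiv_comm' i e (pderiv e F)]
  ring

lemma TP_symm2 (e i j l : σ) : TP F e i j l = TP F e i l j := by
  simp only [TP]
  rw [pderiv_comm' j l F, pderiv_comm' e j F, pderiv_comm' e l F]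
  ring
end tl

/-- decomposition of the tangent space -/
lemma tan_decomp {k σ : Type*} [Field k] [Fintype σ] [DecidableEq σ] {d : ℕ} {F : MvPolynomial σ k}
    (hhom : F.IsHomogeneous d) (e o : σ) (s : Fin 3 → σ)
    (hsum : ∀ f : σ → (σ → k), ∑ i, f i = f e + f o + ∑ t, f (s t)) (a : σ → k) (hFa : eval a F = 0)
    (hG : eval a (pderiv e F) ≠ 0) (hao : a o ≠ 0) (y : σ → k) (hy : gr F a y = 0) :
    ∃ (c : k) (v : Fin 3 → k), y = c • a + ∑ t, v t • xi F e a (s t) := by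
  have hga : gr F a a = 0 := by rw [euler_gr F hhom, hFa, mul_zero]
  have h1 := xi_decomp F e a (y - (y o / a o) • a) (by rw [map_sub, map_smul, hy, hga]; simp)
  rw [hsum] at h1
  have h2 : xi F e a e = 0 := by simp [xi]
  have h3 : (y - (y o / a o) • a) o = 0 := by simp [hao]
  rw [h2, h3, smul_zero, zero_smul, zero_add, zero_add] at h1
  set y' := y - (y o / a o) • a with hy'
  refine ⟨y o / a o, fun t => (eval a (pderiv e F))⁻¹ * y' (s t), ?_⟩
  simp only [mul_smul, ← Finset.smul_sum]
  rw [← h1, smul_smul, inv_mul_cancel₀ hG, one_smul, hy']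
  abel


lemma bl_tan {k σ : Type*} [Field k] [Fintype σ] [DecidableEq σ] {d : ℕ} {F : MvPolynomial σ k}
    (hhom : F.IsHomogeneous d) (e : σ) (s : Fin 3 → σ) (a : σ → k) (hFa : eval a F = 0)
    (c c' : k) (v w : Fin 3 → k) :
    bl F a (c • a + ∑ t, v t • xi F e a (s t)) (c' • a + ∑ t, w t • xi F e a (s t))
      = bet (fun i j => eval a (Bp F e (s i) (s j))) v w := by
  have hg : ∀ v : Fin 3 → k, gr F a (∑ t, v t • xi F e a (s t)) = 0 := by
    intro v; simp [map_sum, gr_xi]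
  have hga : gr F a a = 0 := by rw [euler_gr F hhom, hFa, mul_zero]
  have h1 : ∀ y, gr F a y = 0 → bl F a a y = 0 := by
    intro y hy; rw [euler_bl F hhom, hy, mul_zero]
  rw [bl_add, bl_smul, map_add, map_add, map_smul, map_smul, h1 _ hga, h1 _ (hg w), bl_symm F a _ a,
    h1 _ (hg v), bl_comb]
  simp [bl_xi]

lemma pt4 {k : Type*} [Field k] [IsAlgClosed k] [CharZero k] {d : ℕ}
    {F : MvPolynomial (Fin (4 + 1)) k} (hhom : F.IsHomogeneous d)
    (a : Fin (4 + 1) → k) (ha : a ≠ 0) (hFa : eval a F = 0)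
    (hcov : ∀ ℓ : (Fin (4 + 1) → k) →ₗ[k] k, ℓ ≠ 0 → ℓ a = 0 →
      ∃ W : Submodule k (Fin (4 + 1) → k), Module.finrank k W = 4 - 2 ∧ a ∈ W ∧
        ∀ y ∈ W, ℓ y = 0 ∧ eval y F = 0)
    (e o : Fin (4 + 1)) (s : Fin 3 → Fin (4 + 1))
    (hsum : ∀ f : Fin (4 + 1) → (Fin (4 + 1) → k), ∑ i, f i = f e + f o + ∑ t, f (s t))
    (hG : eval a (pderiv e F) ≠ 0) (hao : a o ≠ 0)
    (hdet : (Matrix.of fun i j => eval a (Bp F e (s i) (s j))).det ≠ 0)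
    (v : Fin 3 → k) (hv : bet (fun i j => eval a (Bp F e (s i) (s j))) v v = 0) :
    tri (fun i j l => eval a (TP F e (s i) (s j) (s l))) v v v = 0 := by
  by_cases hv0 : v = 0
  · subst hv0; simp
  set B := fun i j => eval a (Bp F e (s i) (s j)) with hB
  have nd : ∀ x, (∀ z, bet B x z = 0) → x = 0 := bet_nondeg B hdet
  have hbs : ∀ x y, bet B x y = bet B y x := by
    intro x y
    rw [bet_apply, bet_apply, Finset.sum_comm]
    exact Finset.sum_congr rfl fun i _ => Finset.sum_congr rfl fun j _ => by
      simp only [hB]; rw [Bp_symm]; ring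
  set y := ∑ t, v t • xi F e a (s t) with hy
  have bt := bl_tan hhom e s a hFa
  have bt0 : ∀ (c' : k) (w : Fin 3 → k), bl F a y (c' • a + ∑ t, w t • xi F e a (s t)) = bet B v w := by
    intro c' w
    have := bt 0 c' v w
    rwa [zero_smul, zero_add] at this
  have hℓ : bl F a y ≠ 0 := by
    intro h0
    apply hv0
    apply nd
    intro z
    rw [← bt0 0 z, h0]; rfl
  have hℓa : bl F a y a = 0 := by
    have := bt0 1 0
    simpa using this
  obtain ⟨W, hW, haW, hWy⟩ := hcov _ hℓ hℓa
  obtain ⟨w, hwW, hwa⟩ : ∃ w ∈ W, w ∉ Submodule.span k {a} := by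
    by_contra! h
    have h1 := Submodule.finrank_mono (show W ≤ Submodule.span k {a} from h)
    rw [finrank_span_singleton ha, hW] at h1
    omega
  have hline := line_of_sub haW hwW (fun y hy => (hWy y hy).2)
  obtain ⟨c, u, hu⟩ := tan_decomp hhom e o s hsum a hFa hG hao w hline.1
  have hvu : bet B v u = 0 := by
    rw [← bt0 c u, ← hu]; exact (hWy w hwW).1
  have huu : bet B u u = 0 := by
    rw [← bt c c u u, ← hu]; exact hline.2.1
  obtain ⟨r, hr⟩ := iso3 (k := k) (V := Fin 3 → k) (by simp) (fun x => bet B x) (by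
    intro x c y h
    have := nd (x - c • y) (by intro z; simp [h z])
    exact sub_eq_zero.1 this) u v hv0 huu (by rw [hbs]; exact hvu) hvu hv
  have hw2 : w = c • a + r • y := by
    rw [hu, hr, hy]
    simp [Finset.smul_sum, mul_smul]
  have hr0 : r ≠ 0 := by
    rintro rfl
    apply hwa
    rw [hw2, zero_smul, add_zero]
    exact Submodule.smul_mem _ _ (Submodule.mem_span_singleton_self a)
  have hyW : y ∈ W := by
    have : y = r⁻¹ • (w - c • a) := by
      rw [hw2, add_sub_cancel_left, smul_smul, inv_mul_cancel₀ hr0, one_smul]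
    rw [this]
    exact W.smul_mem _ (W.sub_mem hwW (W.smul_mem _ haW))
  have h3 := (line_of_sub haW hyW (fun y hy => (hWy y hy).2)).2.2
  rw [hy, tl_comb] at h3
  simpa only [tl_xi] using h3

lemma noTriple4 {k : Type*} [Field k] {d : ℕ}
    {F : MvPolynomial (Fin (4 + 1)) k} (hhom : F.IsHomogeneous d)
    (a : Fin (4 + 1) → k) (hFa : eval a F = 0)
    (e o : Fin (4 + 1)) (s : Fin 3 → Fin (4 + 1))
    (hsum : ∀ f : Fin (4 + 1) → (Fin (4 + 1) → k), ∑ i, f i = f e + f o + ∑ t, f (s t))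
    (hG : eval a (pderiv e F) ≠ 0) (hao : a o ≠ 0)
    (hdet : (Matrix.of fun i j => eval a (Bp F e (s i) (s j))).det = 0)
    (E : Fin 3 → Fin (4 + 1) → k) (hE : ∀ i, gr F a (E i) = 0)
    (hEE : ∀ i j, bl F a (E i) (E j) = if i = j then 1 else 0) : False := by
  choose c v hv using fun i => tan_decomp hhom e o s hsum a hFa hG hao (E i) (hE i)
  have h1 : Matrix.of v * (Matrix.of fun i j => eval a (Bp F e (s i) (s j))) * (Matrix.of v).transpose = 1 := by
    ext i j
    have := hEE i j
    rw [hv i, hv j, bl_tan hhom e s a hFa, bet_apply] at this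
    rw [Matrix.one_apply, ← this]
    simp only [Matrix.mul_apply, Matrix.of_apply, Matrix.transpose_apply, Fin.sum_univ_three]
    ring
  have h2 := congrArg Matrix.det h1
  rw [Matrix.det_mul, Matrix.det_mul, hdet] at h2
  simp at h2


lemma case4 {k : Type u} [Field k] [IsAlgClosed k] [CharZero k] {d : ℕ}
    (hd : 3 ≤ d) {F : MvPolynomial (Fin (4 + 1)) k} (hhom : F.IsHomogeneous d) (hF : Irreducible F)
    (hcov : ∀ ℓ : (Fin (4+1) → k) →ₗ[k] k, ℓ ≠ 0 → ∀ x : Fin (4+1) → k, x ≠ 0 → eval x F = 0 →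
      ℓ x = 0 → ∃ W : Submodule k (Fin (4+1) → k), Module.finrank k W = 4-2 ∧ x ∈ W ∧
        ∀ y ∈ W, ℓ y = 0 ∧ eval y F = 0) (x : Fin (4 + 1) → k) (hx : eval x F = 0) :
    ∃ W : Submodule k (Fin (4 + 1) → k), Module.finrank k W = 4 - 1 ∧ x ∈ W ∧
        ∀ y ∈ W, eval y F = 0 := by
  have hpr : Prime F := UniqueFactorizationMonoid.irreducible_iff_prime.1 hF
  obtain ⟨e, he⟩ := setup (by omega) hhom hF
  obtain ⟨K, i1, i2, ι, D, p, H⟩ := existFrame hF e he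
  obtain ⟨i, j, hij⟩ := H.exists_B (by omega) hhom hF.ne_zero
  obtain ⟨o, s, hoe, hos, hes, hsi, hset⟩ : ∃ (o : Fin (4 + 1)) (s : Fin 3 → Fin (4 + 1)),
      o ≠ e ∧ (∀ i, o ≠ s i) ∧ (∀ i, e ≠ s i) ∧ Function.Injective s ∧
      (Finset.univ : Finset (Fin (4 + 1))) = {e, o, s 0, s 1, s 2} := by
    refine ⟨e + 1, fun t => e + 2 + Fin.castLE (by norm_num) t, ?_⟩
    clear hij he H D p
    revert e
    decide
  have hsum : ∀ {M : Type u} [AddCommMonoid M] (f : Fin (4 + 1) → M),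
      ∑ i, f i = f e + f o + ∑ t, f (s t) := by
    intro M _ f
    rw [hset, Finset.sum_insert, Finset.sum_insert, Finset.sum_insert, Finset.sum_insert,
      Finset.sum_singleton, Fin.sum_univ_three]
    · simp only [add_assoc]
    · simp [hsi.eq_iff]
    · simp [hsi.eq_iff]
    · simp [hos]
    · simp [hes, hoe.symm]
  have hXo : ¬ F ∣ X o := not_dvd_deg hhom hF.ne_zero (X_ne_zero o) (by rw [totalDegree_X]; omega)
  have hev : ∀ a, (Matrix.of fun i j => eval a (Bp F e (s i) (s j))).det
      = eval a (Matrix.of fun i j => Bp F e (s i) (s j)).det := by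
    intro a
    rw [RingHom.map_det]; rfl
  by_cases hdet : F ∣ (Matrix.of fun i j => Bp F e (s i) (s j)).det
  · refine assemble le_rfl (by omega) hhom hF hcov e he i j hij (X o) hXo ?_ x hx
    intro a ha hFa hao hG hg e1 e2 e3 g1 g2 g3 h11 h22 h33 h12 h13 h23
    rw [eval_X] at hao
    refine noTriple4 hhom a hFa e o s hsum hG hao ?_ ![e1, e2, e3] ?_ ?_
    · rw [hev]
      obtain ⟨q, hq⟩ := hdet
      rw [hq, map_mul, hFa, zero_mul]
    · intro i; fin_cases i <;> simp [g1, g2, g3]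
    · have h21 := bl_symm F a e2 e1
      have h31 := bl_symm F a e3 e1
      have h32 := bl_symm F a e3 e2
      intro i j; fin_cases i <;> fin_cases j <;> simp [h11, h22, h33, h12, h13, h23, h21, h31, h32]
  · exfalso
    set M := Matrix.of fun i j => Bp F e (s i) (s j) with hM
    let ψ : Fin 3 → MvPolynomial (Fin (4 + 1)) k := fun l => ∑ i, ∑ j, M.adjugate i j * TP F e (s i) (s j) (s l)
    have hU : ∀ i j l, F ∣ 5 * M.det * TP F e (s i) (s j) (s l) - (ψ i * Bp F e (s j) (s l)
        + ψ j * Bp F e (s i) (s l) + ψ l * Bp F e (s i) (s j)) := by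
      intro i j l
      by_contra hU
      set U := 5 * M.det * TP F e (s i) (s j) (s l) - (ψ i * Bp F e (s j) (s l)
        + ψ j * Bp F e (s i) (s l) + ψ l * Bp F e (s i) (s j)) with hUdef
      have hu : ¬ F ∣ U * M.det * pderiv e F * X o := by
        intro h
        rcases hpr.dvd_or_dvd h with h | h
        · rcases hpr.dvd_or_dvd h with h | h
          · rcases hpr.dvd_or_dvd h with h | h
            · exact hU h
            · exact hdet h
          · exact he h
        · exact hXo h
      obtain ⟨a, hFa, hua⟩ := generic_pt hF hu
      simp only [map_mul, eval_X] at hua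
      have hao := right_ne_zero_of_mul hua
      have hua := left_ne_zero_of_mul hua
      have hG := right_ne_zero_of_mul hua
      have hua := left_ne_zero_of_mul hua
      have hda := right_ne_zero_of_mul hua
      have hUa := left_ne_zero_of_mul hua
      have ha : a ≠ 0 := by rintro rfl; simp at hao
      rw [← hev] at hda
      have hbs : ∀ i j, eval a (Bp F e (s i) (s j)) = eval a (Bp F e (s j) (s i)) := fun i j => by
        rw [Bp_symm]
      obtain ⟨θ, hθ⟩ := conic (fun i j => eval a (Bp F e (s i) (s j))) hbs hda
        (fun i j l => eval a (TP F e (s i) (s j) (s l)))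
        (fun i j l => congrArg (eval a) (TP_symm1 F e _ _ _)) (fun i j l => congrArg (eval a) (TP_symm2 F e _ _ _))
        (pt4 hhom a ha hFa (fun ℓ hℓ hl => hcov ℓ hℓ a ha hFa hl) e o s hsum hG hao hda)
      apply hUa
      obtain ⟨hi, his, R⟩ := inv_exists (fun i j => eval a (Bp F e (s i) (s j))) hbs hda
      have hadj : ∀ i j, eval a (M.adjugate i j) = eval a M.det * hi i j := by
        intro i j
        have e1 : (eval a).mapMatrix M.adjugate = ((eval a).mapMatrix M).adjugate :=
          RingHom.map_adjugate _ _
        have e2 : Matrix.of hi * (eval a).mapMatrix M = 1 := by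
          ext i j
          rw [Matrix.mul_apply, Fin.sum_univ_three, Matrix.one_apply]
          exact R i j
        have e3 : ((eval a).mapMatrix M).adjugate = ((eval a).mapMatrix M).det • Matrix.of hi := by
          have := Matrix.mul_adjugate ((eval a).mapMatrix M)
          calc ((eval a).mapMatrix M).adjugate
              = (Matrix.of hi * (eval a).mapMatrix M) * ((eval a).mapMatrix M).adjugate := by
                rw [e2, one_mul]
            _ = _ := by rw [mul_assoc, this, Matrix.mul_smul, mul_one]
        have e4 := congrFun (congrFun (e1.trans e3) i) j
        rw [← RingHom.map_det] at e4
        exact e4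
      have hψ : ∀ l, eval a (ψ l) = eval a M.det * (5 * θ l) := by
        intro l
        rw [← ctr5 hbs his R θ _ hθ l]
        simp only [ψ, map_sum, map_add, map_mul, hadj, Fin.sum_univ_three]
        ring
      have h5 : eval a (5 : MvPolynomial (Fin (4 + 1)) k) = 5 := map_ofNat _ 5
      have := hθ i j l
      rw [hUdef, map_sub, map_add, map_add, map_mul, map_mul, map_mul, map_mul, map_mul, h5, hψ, hψ,
        hψ, this]
      ring
    have : CharZero K := charZero_of_injective_algebraMap (algebraMap k K).injective
    have hdι : ι M.det ≠ 0 := fun h => hdet ((H.hker _).1 h)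
    refine Kpart H hd hhom hF.ne_zero o s hoe hos hes hsi hsum (fun h => hXo ((H.hker _).1 h)) ?_
      (fun i => ι (ψ i) / (5 * ι M.det)) ?_
    · intro h
      apply hdι
      rw [← h, AlgHom.map_det]; rfl
    · intro i j l
      have h := (H.hker _).2 (hU i j l)
      have h5 : ι (5 : MvPolynomial (Fin (4 + 1)) k) = 5 := map_ofNat _ 5
      rw [map_sub, map_add, map_add, map_mul, map_mul, map_mul, map_mul, map_mul, h5] at h
      field_simp
      linear_combination h

/-- Theorem 7.5 of Salberger: let `X = {F = 0} ⊂ P^n` be an integral non-linear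
hypersurface over an algebraically closed field of characteristic `0`, of dimension at
least four (`n ≥ 5`), or of dimension three (`n = 4`) and degree at least three.  If
every hyperplane section of `X` is covered by its linear divisors, then `X` is covered
by its linear divisors. -/
theorem stmt_13 (k : Type*) [Field k] [IsAlgClosed k] [CharZero k] (n d : ℕ)
    (hnd : 5 ≤ n ∨ (n = 4 ∧ 3 ≤ d)) (hd : 2 ≤ d)
    (F : MvPolynomial (Fin (n + 1)) k) (hhom : F.IsHomogeneous d) (hirr : Irreducible F)
    (hcov : ∀ ℓ : (Fin (n + 1) → k) →ₗ[k] k, ℓ ≠ 0 →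
      ∀ x : Fin (n + 1) → k, x ≠ 0 → eval x F = 0 → ℓ x = 0 →
      ∃ W : Submodule k (Fin (n + 1) → k), Module.finrank k W = n - 2 ∧ x ∈ W ∧
        ∀ y ∈ W, ℓ y = 0 ∧ eval y F = 0) :
    ∀ x : Fin (n + 1) → k, x ≠ 0 → eval x F = 0 →
      ∃ W : Submodule k (Fin (n + 1) → k), Module.finrank k W = n - 1 ∧ x ∈ W ∧
        ∀ y ∈ W, eval y F = 0 := by
  intro x _ hx
  rcases hnd with hn | ⟨rfl, hd3⟩
  · exact case5 hn hd hhom hirr hcov x hx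
  · exact case4 hd3 hhom hirr hcov x hx
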